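/- arXiv:1707.08162 — 4 statements merged into one kernel-verified Lean document; each statement's English description precedes it below -/
import Mathlib

section
/- Let X = (X¹, X²) be as in the context (visible fold of X at the origin, flow moving rightwards). Then there exist ξ > 0, δ > 0, p⁺ ∈ ℝ, ℓ₁ > 0 and C > 0 such that for every x₀ ∈ [0, δ): (i) there exist T > 0 and a C¹ curve γ : [0, T] → U with γ(0) = (x₀, 0), γ'(t) = X(γ(t)) for all t ∈ [0, T], γ₂(T) = ξ, and γ₂(t) < ξ for 0 ≤ t < T; and (ii) for every such pair (T, γ), the hitting position satisfies |γ₁(T) − p⁺ − ℓ₁·x₀²| ≤ C·x₀³. In other words, the transition map ρ₁(x₀) = γ₁(T) from the segment {(x,0) : 0 ≤ x < δ} to the section Σ⁺ = {y = ξ} is well defined and satisfies ρ₁(x₀) = p⁺ + ℓ₁·x₀² + O(x₀³) with ℓ₁ > 0. -/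
/-!
Write the trajectories near the fold as graphs of solutions of `y' = f (x, y)` with `f = X² / X¹`,
let `h` be the solution through the origin and `exp ∘ B` the solution of its variational equation.
Then `Φ (x, y) = (h x - y) * exp (-B x)` is almost a first integral: its derivative along `X` is
`O(Φ²)`, hence by Gronwall it changes by `O(Φ²)` between the two sections. On `y = 0` it equals
`h x + O(x³) = a / 2 * x² + O(x³)` with `a = ∂f/∂x (0, 0) > 0`, and on `y = h p` it has a simple
zero at `x = p` with derivative `κ > 0`. Equating both values up to `O(x₀⁴)` gives the hitting
position `p + a / (2 * κ) * x₀² + O(x₀³)`.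
-/

open Set Filter Topology Asymptotics Metric

section Calculus

variable {E F : Type*} [NormedAddCommGroup E] [NormedSpace ℝ E] [NormedAddCommGroup F]
  [NormedSpace ℝ F]

lemma isBigO_sub_sub_fderiv_norm_sq {f : E → F} {x₀ : E} (hf : ContDiffAt ℝ 2 f x₀) :
    (fun q : E × E => f q.1 - f q.2 - fderiv ℝ f q.2 (q.1 - q.2)) =O[𝓝 (x₀, x₀)]
      fun q => ‖q.1 - q.2‖ ^ 2 := by
  obtain ⟨K, s, hs, hK⟩ :=
    (hf.fderiv_right (m := 1) (by norm_num)).exists_lipschitzOnWith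
  have hdiff : ∀ᶠ x in 𝓝 x₀, DifferentiableAt ℝ f x :=
    (hf.eventually (by simp)).mono fun x hx => hx.differentiableAt (by norm_num)
  obtain ⟨ε, hε, hball⟩ := eventually_nhds_iff_ball.1 (hdiff.and hs)
  refine .of_bound K ?_
  filter_upwards [prod_mem_nhds (ball_mem_nhds x₀ hε) (ball_mem_nhds x₀ hε)]
    with ⟨u, v⟩ ⟨hu, hv⟩
  have hseg : segment ℝ v u ⊆ ball x₀ ε := (convex_ball x₀ ε).segment_subset hv hu
  have hbound : ∀ x ∈ segment ℝ v u, ‖fderiv ℝ f x - fderiv ℝ f v‖ ≤ K * ‖u - v‖ := fun x hx =>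
    calc ‖fderiv ℝ f x - fderiv ℝ f v‖ ≤ K * ‖x - v‖ := by
          simpa only [dist_eq_norm] using
            hK.dist_le_mul x (hball x (hseg hx)).2 v (hball v hv).2
      _ ≤ K * ‖u - v‖ := by gcongr; exact norm_sub_le_of_mem_segment hx
  have hmvt := (convex_segment v u).norm_image_sub_le_of_norm_fderiv_le'
    (fun x hx => (hball x (hseg hx)).1) hbound (left_mem_segment ℝ v u) (right_mem_segment ℝ v u)
  rw [norm_pow, norm_norm, pow_two, ← mul_assoc]
  exact hmvt

lemma isBigO_sub_sub_deriv_sq {g : ℝ → F} {g' : F} {x₀ : ℝ} (hg : ContDiffAt ℝ 2 g x₀)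
    (hg' : HasDerivAt g g' x₀) :
    (fun x => g x - g x₀ - (x - x₀) • g') =O[𝓝 x₀] fun x => (x - x₀) ^ 2 := by
  have hpair : Tendsto (fun x : ℝ => (x, x₀)) (𝓝 x₀) (𝓝 (x₀, x₀)) :=
    (continuous_id.prodMk continuous_const).tendsto x₀
  simpa [Function.comp_def, hg'.deriv] using
    (isBigO_sub_sub_fderiv_norm_sq hg).comp_tendsto hpair

lemma isBigO_pow_succ_of_eventually_hasDerivAt {g g' : ℝ → F} {x₀ : ℝ} {n : ℕ}
    (hg : ∀ᶠ x in 𝓝 x₀, HasDerivAt g (g' x) x) (hg' : g' =O[𝓝 x₀] fun x => (x - x₀) ^ n) :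
    (fun x => g x - g x₀) =O[𝓝 x₀] fun x => (x - x₀) ^ (n + 1) := by
  obtain ⟨C, hC, hbound⟩ := hg'.exists_nonneg
  obtain ⟨ε, hε, hball⟩ := eventually_nhds_iff_ball.1 (hg.and hbound.bound)
  refine .of_bound C ?_
  filter_upwards [ball_mem_nhds x₀ hε] with x hx
  have hseg : segment ℝ x₀ x ⊆ ball x₀ ε :=
    (convex_ball x₀ ε).segment_subset (mem_ball_self hε) hx
  have hderiv_le : ∀ y ∈ segment ℝ x₀ x, ‖g' y‖ ≤ C * ‖(x - x₀) ^ n‖ := fun y hy =>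
    calc ‖g' y‖ ≤ C * ‖(y - x₀) ^ n‖ := (hball y (hseg hy)).2
      _ ≤ C * ‖(x - x₀) ^ n‖ := by
        simp only [norm_pow]
        gcongr
        exact norm_sub_le_of_mem_segment hy
  calc ‖g x - g x₀‖ ≤ C * ‖(x - x₀) ^ n‖ * ‖x - x₀‖ :=
        (convex_segment x₀ x).norm_image_sub_le_of_norm_hasDerivWithin_le
          (fun y hy => (hball y (hseg hy)).1.hasDerivWithinAt) hderiv_le
          (left_mem_segment ℝ x₀ x) (right_mem_segment ℝ x₀ x)
    _ = C * ‖(x - x₀) ^ (n + 1)‖ := by rw [pow_succ, norm_mul, mul_assoc]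

lemma isBigO_sub_sub_div_sq {g : ℝ → ℝ} {κ p : ℝ} (hg : ContDiffAt ℝ 2 g p)
    (hκ : HasDerivAt g κ p) (hκ0 : κ ≠ 0) :
    (fun x => x - p - (g x - g p) / κ) =O[𝓝 p] fun x => (g x - g p) ^ 2 := by
  have hinv : (fun x => x - p) =O[𝓝 p] fun x => g x - g p :=
    (HasDerivAtFilter.isTheta_sub hκ hκ0).isBigO_symm.comp_tendsto
      (tendsto_id.prodMk tendsto_const_pure)
  have htaylor := ((isBigO_sub_sub_deriv_sq hg hκ).trans (hinv.pow 2)).const_mul_left (-κ⁻¹)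
  refine htaylor.congr_left fun x => ?_
  rw [smul_eq_mul]
  field_simp
  ring

lemma isBigO_sub_mul_sq_of_isBigO {ι : Type*} {l : Filter ι} {x v w ρ : ι → ℝ} {β κ : ℝ}
    (hx : Tendsto x l (𝓝 0)) (hv : (fun i => v i - β * x i ^ 2) =O[l] fun i => x i ^ 3)
    (hw : (fun i => w i - v i) =O[l] fun i => v i ^ 2)
    (hρ : (fun i => ρ i - w i / κ) =O[l] fun i => w i ^ 2) :
    (fun i => ρ i - β / κ * x i ^ 2) =O[l] fun i => x i ^ 3 := by
  have hpow {m n : ℕ} (h : m < n) : (fun i => x i ^ n) =O[l] fun i => x i ^ m :=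
    ((isLittleO_pow_pow h).comp_tendsto hx).isBigO
  have hv_sq : v =O[l] fun i => x i ^ 2 := by
    simpa using (hv.trans (hpow (by norm_num : 2 < 3))).add
      ((isBigO_refl (fun i => x i ^ 2) l).const_mul_left β)
  have sq_isBigO {u : ι → ℝ} (hu : u =O[l] fun i => x i ^ 2) :
      (fun i => u i ^ 2) =O[l] fun i => x i ^ 3 :=
    (hu.pow 2).trans (by simpa only [← pow_mul] using hpow (by norm_num : 3 < 2 * 2))
  have hw_cube : (fun i => w i - v i) =O[l] fun i => x i ^ 3 := hw.trans (sq_isBigO hv_sq)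
  have hw_sq : w =O[l] fun i => x i ^ 2 := by
    simpa using (hw_cube.trans (hpow (by norm_num : 2 < 3))).add hv_sq
  refine ((hρ.trans (sq_isBigO hw_sq)).add ((hw_cube.add hv).const_mul_left κ⁻¹)).congr_left
    fun i => ?_
  ring

lemma exists_forall_abs_sub_sub_le_mul_abs_pow_three {u g : ℝ → ℝ} {β κ p : ℝ} (K : ℝ)
    (hu : (fun x => u x - β * x ^ 2) =O[𝓝 0] fun x => x ^ 3) (hg : ContDiffAt ℝ 2 g p)
    (hκ : HasDerivAt g κ p) (hκ0 : κ ≠ 0) (hgp : g p = 0) :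
    ∃ C > 0, ∀ᶠ z in 𝓝 ((0 : ℝ), p), |g z.2 - u z.1| ≤ K * u z.1 ^ 2 →
      |z.2 - p - β / κ * z.1 ^ 2| ≤ C * |z.1| ^ 3 := by
  set l : Filter (ℝ × ℝ) := 𝓝 (0, p) ⊓ 𝓟 {z | |g z.2 - u z.1| ≤ K * u z.1 ^ 2}
  have hfst : Tendsto Prod.fst l (𝓝 0) := continuous_fst.continuousAt.mono_left inf_le_left
  have hsnd : Tendsto Prod.snd l (𝓝 p) := continuous_snd.continuousAt.mono_left inf_le_left
  have hgu : (fun z => g z.2 - u z.1) =O[l] fun z => u z.1 ^ 2 :=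
    .of_bound K (eventually_inf_principal.2 (.of_forall fun z hz => by simpa using hz))
  have hinv : (fun z => z.2 - p - g z.2 / κ) =O[l] fun z => g z.2 ^ 2 := by
    simpa only [hgp, sub_zero, Function.comp_def] using
      (isBigO_sub_sub_div_sq hg hκ hκ0).comp_tendsto hsnd
  obtain ⟨C, hC, hbound⟩ :=
    (isBigO_sub_mul_sq_of_isBigO hfst (hu.comp_tendsto hfst) hgu hinv).exists_pos
  refine ⟨C, hC, (eventually_inf_principal.1 hbound.bound).mono fun z hz hzl => ?_⟩
  simpa using hz hzl

lemma hasFDerivAt_div_of_eq_zero {c d : E → ℝ} {c' : E →L[ℝ] ℝ} {x : E}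
    (hc : HasFDerivAt c c' x) (hd : DifferentiableAt ℝ d x) (hd0 : d x ≠ 0) (hc0 : c x = 0) :
    HasFDerivAt (fun y => c y / d y) ((d x)⁻¹ • c') x := by
  simpa only [div_eq_mul_inv, hc0, zero_smul, zero_add] using
    hc.fun_mul (hd.fun_inv hd0).hasFDerivAt

end Calculus

section Curves

lemma exists_first_hit {φ : ℝ → ℝ} {a b ξ : ℝ} (hab : a ≤ b) (hφ : ContinuousOn φ (Icc a b))
    (ha : φ a < ξ) (hb : ξ ≤ φ b) :
    ∃ T ∈ Ioc a b, φ T = ξ ∧ ∀ t ∈ Ico a T, φ t < ξ := by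
  have hcompact : IsCompact (Icc a b ∩ φ ⁻¹' {ξ}) :=
    isCompact_Icc.of_isClosed_subset
      (hφ.preimage_isClosed_of_isClosed isClosed_Icc isClosed_singleton) inter_subset_left
  obtain ⟨T, ⟨hT, hTξ⟩, hleast⟩ :=
    hcompact.exists_isLeast (intermediate_value_Icc hab hφ ⟨ha.le, hb⟩)
  have haT : a < T := hT.1.lt_of_ne fun h => ha.ne (h ▸ hTξ)
  refine ⟨T, ⟨haT, hT.2⟩, hTξ, fun t ht => ?_⟩
  by_contra! hξt
  have htb : t ≤ b := ht.2.le.trans hT.2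
  obtain ⟨s, hs, hsξ⟩ :=
    intermediate_value_Icc ht.1 (hφ.mono (Icc_subset_Icc_right htb)) ⟨ha.le, hξt⟩
  exact ((hleast ⟨⟨hs.1, hs.2.trans htb⟩, hsξ⟩).trans hs.2).not_gt ht.2

lemma forall_mem_of_forall_mem_interior {Y : Type*} [TopologicalSpace Y] {γ : ℝ → Y} {K : Set Y}
    {a b : ℝ} (hγ : ContinuousOn γ (Icc a b)) (hK : IsClosed K) (ha : γ a ∈ K)
    (hint : ∀ t ∈ Ico a b, (∀ s ∈ Icc a t, γ s ∈ K) → γ t ∈ interior K) :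
    ∀ t ∈ Icc a b, γ t ∈ K := by
  refine IsClosed.Icc_subset_of_forall_mem_nhdsGT_of_Icc_subset (s := γ ⁻¹' K) ?_ ha ?_
  · rw [inter_comm]
    exact hγ.preimage_isClosed_of_isClosed isClosed_Icc hK
  · intro t ht hsub
    have hpre : γ ⁻¹' K ∈ 𝓝[Icc a b] t :=
      hγ t (Ico_subset_Icc_self ht) (mem_interior_iff_mem_nhds.1 (hint t ht hsub))
    exact nhdsWithin_le_of_mem (Icc_mem_nhdsGT_of_mem ht) hpre

-- Gronwall bounds `φ` by a multiple of `φ 0`, so that `φ'` is a multiple of `φ 0 ^ 2`.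
lemma abs_sub_le_of_abs_deriv_le_sq {φ φ' : ℝ → ℝ} {K R T : ℝ} (hK : 0 ≤ K)
    (hφ : ∀ t ∈ Icc 0 T, HasDerivWithinAt φ (φ' t) (Icc 0 T) t)
    (hφ' : ∀ t ∈ Icc 0 T, |φ' t| ≤ K * φ t ^ 2) (hR : ∀ t ∈ Icc 0 T, |φ t| ≤ R) :
    ∀ t ∈ Icc 0 T, |φ t - φ 0| ≤ K * T * Real.exp (K * R * T) ^ 2 * φ 0 ^ 2 := by
  intro t ht
  have : 0 ≤ T := ht.1.trans ht.2
  have hR0 : 0 ≤ R := (abs_nonneg _).trans (hR t ht)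
  have hlinear : ∀ s ∈ Ico 0 T, ‖φ' s‖ ≤ K * R * ‖φ s‖ + 0 := fun s hs =>
    calc |φ' s| ≤ K * (|φ s| * |φ s|) := by
          simpa [abs_mul_abs_self, pow_two] using hφ' s (Ico_subset_Icc_self hs)
      _ ≤ K * (R * |φ s|) := by gcongr; exact hR s (Ico_subset_Icc_self hs)
      _ = K * R * |φ s| + 0 := by ring
  have hgronwall : ∀ s ∈ Icc 0 T, |φ s| ≤ |φ 0| * Real.exp (K * R * T) := fun s hs =>
    calc |φ s| ≤ |φ 0| * Real.exp (K * R * (s - 0)) := by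
          simpa only [gronwallBound_ε0, Real.norm_eq_abs] using
            norm_le_gronwallBound_of_norm_deriv_right_le (fun u hu => (hφ u hu).continuousWithinAt)
            (fun u hu => (hφ u (Ico_subset_Icc_self hu)).mono_of_mem_nhdsWithin
              (Icc_mem_nhdsGE_of_mem hu)) le_rfl hlinear s hs
      _ ≤ |φ 0| * Real.exp (K * R * T) := by rw [sub_zero]; gcongr; exact hs.2
  have hderiv_le : ∀ s ∈ Ico 0 T, ‖φ' s‖ ≤ K * (|φ 0| * Real.exp (K * R * T)) ^ 2 := fun s hs =>
    (hφ' s (Ico_subset_Icc_self hs)).trans <| by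
      rw [← sq_abs (φ s)]
      gcongr
      exact hgronwall s (Ico_subset_Icc_self hs)
  calc |φ t - φ 0| ≤ K * (|φ 0| * Real.exp (K * R * T)) ^ 2 * (t - 0) :=
        norm_image_sub_le_of_norm_deriv_le_segment' hφ hderiv_le t ht
    _ ≤ K * (|φ 0| * Real.exp (K * R * T)) ^ 2 * T := by rw [sub_zero]; gcongr; exact ht.2
    _ = K * T * Real.exp (K * R * T) ^ 2 * φ 0 ^ 2 := by rw [mul_pow, sq_abs]; ring

lemma exists_pos_forall_abs_sub_lt_mem {h : ℝ → ℝ} {a b p : ℝ} (hmono : StrictMonoOn h (Icc a b))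
    (hp : p ∈ Ioo a b) {N : Set ℝ} (hN : N ∈ 𝓝 p) :
    ∃ c > 0, ∀ x ∈ Icc a b, |h x - h p| < c → x ∈ N := by
  obtain ⟨u, hu, huN⟩ := exists_Ioc_subset_of_mem_nhds' (s := N) hN hp.1
  obtain ⟨v, hv, hvN⟩ := exists_Ico_subset_of_mem_nhds' (s := N) hN hp.2
  have hpI : p ∈ Icc a b := Ioo_subset_Icc_self hp
  have huI : u ∈ Icc a b := ⟨hu.1, hu.2.le.trans hpI.2⟩
  have hvI : v ∈ Icc a b := ⟨hpI.1.trans hv.1.le, hv.2⟩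
  refine ⟨min (h p - h u) (h v - h p),
    lt_min (sub_pos.2 (hmono huI hpI hu.2)) (sub_pos.2 (hmono hpI hvI hv.1)), fun x hx hlt => ?_⟩
  obtain ⟨hltu, hltv⟩ := lt_min_iff.1 hlt
  obtain ⟨-, hxp⟩ := abs_lt.1 hltv
  obtain ⟨hpx, -⟩ := abs_lt.1 hltu
  have hux : u < x := (hmono.lt_iff_lt huI hx).1 (by linarith)
  have hxv : x < v := (hmono.lt_iff_lt hx hvI).1 (by linarith)
  exact (le_total x p).elim (fun hxp => huN ⟨hux, hxp⟩) fun hpx => hvN ⟨hpx, hxv⟩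

end Curves

section IntegralCurves

variable {E : Type*} [NormedAddCommGroup E] [NormedSpace ℝ E]

lemma exists_isIntegralCurveAt_of_contDiffAt [CompleteSpace E] {f : ℝ × E → E} {x₀ : ℝ} {y₀ : E}
    (hf : ContDiffAt ℝ 1 f (x₀, y₀)) :
    ∃ h : ℝ → E, h x₀ = y₀ ∧ IsIntegralCurveAt h (fun x y => f (x, y)) x₀ := by
  obtain ⟨α, hα0, ε, hε, hα⟩ := (contDiffAt_const (c := (1 : ℝ)).prodMk hf
    ).exists_forall_mem_closedBall_exists_eq_forall_mem_Ioo_hasDerivAt₀ x₀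
  have hαfst : ∀ t ∈ Ioo (x₀ - ε) (x₀ + ε), HasDerivAt (fun t => (α t).1) 1 t := fun t ht =>
    (ContinuousLinearMap.fst ℝ ℝ E).hasFDerivAt.comp_hasDerivAt t (hα t ht)
  have hαsnd : ∀ t ∈ Ioo (x₀ - ε) (x₀ + ε), HasDerivAt (fun t => (α t).2) (f (α t)) t :=
    fun t ht => (ContinuousLinearMap.snd ℝ ℝ E).hasFDerivAt.comp_hasDerivAt t (hα t ht)
  have hfst : EqOn (fun t => (α t).1) id (Ioo (x₀ - ε) (x₀ + ε)) :=
    isOpen_Ioo.eqOn_of_deriv_eq isPreconnected_Ioo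
      (fun t ht => (hαfst t ht).differentiableAt.differentiableWithinAt) differentiableOn_id
      (fun t ht => by rw [(hαfst t ht).deriv, deriv_id])
      ⟨sub_lt_self x₀ hε, lt_add_of_pos_right x₀ hε⟩ (by simp [hα0])
  refine ⟨fun t => (α t).2, by simp [hα0], ?_⟩
  filter_upwards [Ioo_mem_nhds (sub_lt_self x₀ hε) (lt_add_of_pos_right x₀ hε)] with t ht
  have hαt : α t = (t, (α t).2) := Prod.ext (hfst ht) rfl
  exact hαt ▸ hαsnd t ht

lemma exists_pos_eventually_exists_isIntegralCurveOn [CompleteSpace E] {v : E → E}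
    {x₀ : E} (hv : ContDiffAt ℝ 1 v x₀) :
    ∃ τ > 0, ∀ᶠ q in 𝓝 x₀, ∃ γ : ℝ → E, γ 0 = q ∧ IsIntegralCurveOn γ (fun _ => v) (Icc 0 τ) := by
  obtain ⟨ρ, hρ, ε, hε, hflow⟩ :=
    hv.exists_forall_mem_closedBall_exists_eq_forall_mem_Ioo_hasDerivAt 0
  refine ⟨ε / 2, half_pos hε, ?_⟩
  filter_upwards [closedBall_mem_nhds x₀ hρ] with q hq
  obtain ⟨γ, hγ0, hγ⟩ := hflow q hq
  exact ⟨γ, hγ0, fun t ht =>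
    (hγ t ⟨by linarith [ht.1], by linarith [ht.2]⟩).hasDerivWithinAt⟩

lemma contDiffAt_succ_of_isIntegralCurveAt {h : ℝ → E} {v : ℝ → E → E} {x₀ : ℝ} {n : ℕ}
    (hh : IsIntegralCurveAt h v x₀) (hv : ContDiffAt ℝ n (Function.uncurry v) (x₀, h x₀)) :
    ContDiffAt ℝ (n + 1) h x₀ := by
  have bootstrap {k : ℕ} (hvk : ContDiffAt ℝ k (Function.uncurry v) (x₀, h x₀))
      (hhk : ContDiffAt ℝ k h x₀) : ContDiffAt ℝ (k + 1) h x₀ := by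
    have hvh : ContDiffAt ℝ k (fun t => v t (h t)) x₀ :=
      ContDiffAt.comp x₀ (g := Function.uncurry v) hvk (contDiffAt_id.prodMk hhk)
    exact contDiffAt_succ_iff_hasFDerivAt.2
      ⟨fun t => .toSpanSingleton ℝ (v t (h t)), ⟨_, hh, fun _ ht => ht⟩,
        ContDiffAt.comp (g := ContinuousLinearMap.toSpanSingletonCLE (𝕜 := ℝ)) x₀
          (ContinuousLinearEquiv.contDiff _).contDiffAt hvh⟩
  induction n with
  | zero =>
    refine bootstrap hv (contDiffAt_zero.2 ⟨_, hh, fun t ht => ?_⟩)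
    exact (HasDerivAt.continuousAt ht).continuousWithinAt
  | succ n ih => exact bootstrap hv (ih (hv.of_le (by norm_cast; omega)))

end IntegralCurves

/-- `h` solves `y' = f (x, y)` with `h 0 = 0`, and `exp ∘ B` solves the variational equation of
this solution, normalized at `0`. -/
structure IsVariationalSolution (f : ℝ × ℝ → ℝ) (h B : ℝ → ℝ) : Prop where
  curve_zero : h 0 = 0
  exponent_zero : B 0 = 0
  curve : IsIntegralCurveAt h (fun x y => f (x, y)) 0
  exponent : IsIntegralCurveAt B (fun x _ => fderiv ℝ f (x, h x) (0, 1)) 0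

/-- The vertical displacement from the curve `y = h x`, rescaled by the variational solution
`exp ∘ B`: constant to second order along the solutions of `y' = f (x, y)` close to `h`. -/
noncomputable def rescaledGap (h B : ℝ → ℝ) (q : ℝ × ℝ) : ℝ :=
  (h q.1 - q.2) * Real.exp (-B q.1)

lemma hasFDerivAt_rescaledGap {h B : ℝ → ℝ} {h' b : ℝ} {q : ℝ × ℝ} (hh : HasDerivAt h h' q.1)
    (hB : HasDerivAt B b q.1) :
    HasFDerivAt (rescaledGap h B) (Real.exp (-B q.1) •
      ((h' - b * (h q.1 - q.2)) • ContinuousLinearMap.fst ℝ ℝ ℝ - ContinuousLinearMap.snd ℝ ℝ ℝ))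
      q := by
  have hgap : HasFDerivAt (fun q : ℝ × ℝ => h q.1 - q.2)
      (h' • ContinuousLinearMap.fst ℝ ℝ ℝ - ContinuousLinearMap.snd ℝ ℝ ℝ) q :=
    (hh.comp_hasFDerivAt q hasFDerivAt_fst).sub hasFDerivAt_snd
  refine (hgap.mul (hB.comp_hasFDerivAt q hasFDerivAt_fst).neg.exp).congr_fderiv ?_
  apply ContinuousLinearMap.ext fun v => ?_
  simp only [Pi.neg_apply, Function.comp_apply, smul_neg, add_apply, neg_apply, smul_apply,
    ContinuousLinearMap.coe_fst', smul_eq_mul, sub_apply, ContinuousLinearMap.coe_snd']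
  ring

lemma hasDerivAt_rescaledGap_section {h B : ℝ → ℝ} {h' b p : ℝ} (hh : HasDerivAt h h' p)
    (hB : HasDerivAt B b p) :
    HasDerivAt (fun x => rescaledGap h B (x, h p)) (h' * Real.exp (-B p)) p := by
  have hsection := (hasFDerivAt_rescaledGap (q := (p, h p)) hh hB).comp_hasDerivAt p
    ((hasDerivAt_id p).prodMk (hasDerivAt_const p (h p)))
  simpa [mul_comm, Function.comp_def] using hsection

lemma contDiffAt_rescaledGap_section {h B : ℝ → ℝ} {p : ℝ} {n : WithTop ℕ∞}
    (hh : ContDiffAt ℝ n h p) (hB : ContDiffAt ℝ n B p) (y : ℝ) :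
    ContDiffAt ℝ n (fun x => rescaledGap h B (x, y)) p :=
  (hh.sub contDiffAt_const).mul hB.neg.exp

lemma contDiffAt_fderiv_graph_apply {f : ℝ × ℝ → ℝ} {h : ℝ → ℝ} {x₀ : ℝ} {n : ℕ} (v : ℝ × ℝ)
    (hf : ContDiffAt ℝ (n + 1) f (x₀, h x₀)) (hh : ContDiffAt ℝ n h x₀) :
    ContDiffAt ℝ n (fun x => fderiv ℝ f (x, h x) v) x₀ :=
  (ContDiffAt.comp x₀ (g := fderiv ℝ f) (hf.fderiv_right le_rfl)
    (contDiffAt_id.prodMk hh)).clm_apply contDiffAt_const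

lemma exists_isVariationalSolution {f : ℝ × ℝ → ℝ} (hf : ContDiffAt ℝ 2 f 0) :
    ∃ h B, IsVariationalSolution f h B := by
  obtain ⟨h, h0, hh⟩ := exists_isIntegralCurveAt_of_contDiffAt (x₀ := 0) (y₀ := 0)
    (hf.of_le one_le_two)
  have hf' : ContDiffAt ℝ 2 f (0, h 0) := by rwa [h0]
  have hhC : ContDiffAt ℝ 1 h 0 :=
    contDiffAt_succ_of_isIntegralCurveAt (n := 0) hh (hf'.of_le zero_le_two)
  obtain ⟨B, B0, hB⟩ := exists_isIntegralCurveAt_of_contDiffAt (x₀ := 0) (y₀ := (0 : ℝ))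
    ((contDiffAt_fderiv_graph_apply (n := 1) (0, 1) hf' hhC).comp ((0 : ℝ), (0 : ℝ))
      contDiffAt_fst)
  exact ⟨h, B, h0, B0, hh, hB⟩

namespace IsVariationalSolution

variable {f : ℝ × ℝ → ℝ} {h B : ℝ → ℝ}

lemma graph_zero (hs : IsVariationalSolution f h B) : ((0 : ℝ), h 0) = 0 := by
  rw [hs.curve_zero, Prod.mk_zero_zero]

lemma contDiffAt_curve (hs : IsVariationalSolution f h B) (hf : ContDiffAt ℝ 1 f 0) :
    ContDiffAt ℝ 2 h 0 := by
  rw [← hs.graph_zero] at hf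
  exact contDiffAt_succ_of_isIntegralCurveAt (n := 1) hs.curve hf

lemma contDiffAt_exponent (hs : IsVariationalSolution f h B) (hf : ContDiffAt ℝ 2 f 0) :
    ContDiffAt ℝ 2 B 0 := by
  have hh : ContDiffAt ℝ 1 h 0 := (hs.contDiffAt_curve (hf.of_le one_le_two)).of_le one_le_two
  rw [← hs.graph_zero] at hf
  exact contDiffAt_succ_of_isIntegralCurveAt (n := 1) hs.exponent
    ((contDiffAt_fderiv_graph_apply (n := 1) (0, 1) hf hh).comp (0, B 0) contDiffAt_fst)

lemma tendsto_exp_neg_exponent (hs : IsVariationalSolution f h B) :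
    Tendsto (fun q : ℝ × ℝ => Real.exp (-B q.1)) (𝓝 0) (𝓝 1) := by
  have hB : ContinuousAt (fun q : ℝ × ℝ => Real.exp (-B q.1)) 0 :=
    (ContinuousAt.comp (f := Prod.fst) hs.exponent.continuousAt continuousAt_fst).neg.rexp
  simpa [ContinuousAt, hs.exponent_zero] using hB

lemma tendsto_graph (hs : IsVariationalSolution f h B) :
    Tendsto (fun x => (x, h x)) (𝓝 0) (𝓝 0) := by
  have hcont := continuousAt_id.prodMk hs.curve.continuousAt
  rwa [ContinuousAt, id, hs.graph_zero] at hcont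

lemma eventually_hasFDerivAt_rescaledGap (hs : IsVariationalSolution f h B) :
    ∀ᶠ q in 𝓝 0, HasFDerivAt (rescaledGap h B) (Real.exp (-B q.1) •
      ((f (q.1, h q.1) - fderiv ℝ f (q.1, h q.1) (0, 1) * (h q.1 - q.2)) •
        ContinuousLinearMap.fst ℝ ℝ ℝ - ContinuousLinearMap.snd ℝ ℝ ℝ)) q := by
  have hfst : Tendsto Prod.fst (𝓝 (0 : ℝ × ℝ)) (𝓝 0) := continuous_fst.tendsto 0
  filter_upwards [hfst.eventually hs.curve, hfst.eventually hs.exponent] with q hh hB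
  exact hasFDerivAt_rescaledGap hh hB

lemma tendsto_rescaledGap (hs : IsVariationalSolution f h B) :
    Tendsto (rescaledGap h B) (𝓝 0) (𝓝 0) := by
  simpa [ContinuousAt, rescaledGap, hs.curve_zero] using
    hs.eventually_hasFDerivAt_rescaledGap.self_of_nhds.continuousAt

lemma hasDerivAt_slope_graph (hs : IsVariationalSolution f h B) (hf : DifferentiableAt ℝ f 0)
    (hf0 : f 0 = 0) : HasDerivAt (fun x => f (x, h x)) (fderiv ℝ f 0 (1, 0)) 0 := by
  have hh : HasDerivAt h 0 0 := by
    simpa only [hs.graph_zero, hf0] using hs.curve.hasDerivAt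
  rw [← hs.graph_zero] at hf ⊢
  exact hf.hasFDerivAt.comp_hasDerivAt 0 ((hasDerivAt_id 0).prodMk hh)

lemma isBigO_curve_sub (hs : IsVariationalSolution f h B) (hf : ContDiffAt ℝ 2 f 0)
    (hf0 : f 0 = 0) :
    (fun x => h x - fderiv ℝ f 0 (1, 0) / 2 * x ^ 2) =O[𝓝 0] fun x => x ^ 3 := by
  have hslopeC : ContDiffAt ℝ 2 (fun x => f (x, h x)) 0 :=
    ContDiffAt.comp 0 (by rwa [hs.graph_zero])
      (contDiffAt_id.prodMk (hs.contDiffAt_curve (hf.of_le one_le_two)))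
  have hslope : (fun x => f (x, h x) - fderiv ℝ f 0 (1, 0) * x) =O[𝓝 0] fun x => x ^ 2 := by
    simpa [hs.graph_zero, hf0, mul_comm] using isBigO_sub_sub_deriv_sq hslopeC
      (hs.hasDerivAt_slope_graph (hf.differentiableAt two_ne_zero) hf0)
  have hderiv : ∀ᶠ x in 𝓝 0, HasDerivAt (fun x => h x - fderiv ℝ f 0 (1, 0) / 2 * x ^ 2)
      (f (x, h x) - fderiv ℝ f 0 (1, 0) * x) x := by
    filter_upwards [hs.curve] with x hx
    refine (hx.sub (((hasDerivAt_id x).pow 2).const_mul _)).congr_deriv ?_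
    simp only [id]; ring
  simpa [hs.curve_zero] using
    isBigO_pow_succ_of_eventually_hasDerivAt (n := 2) hderiv (by simpa using hslope)

lemma isBigO_rescaledGap_section_sub (hs : IsVariationalSolution f h B) (hf : ContDiffAt ℝ 2 f 0)
    (hf0 : f 0 = 0) :
    (fun x => rescaledGap h B (x, 0) - fderiv ℝ f 0 (1, 0) / 2 * x ^ 2) =O[𝓝 0]
      fun x => x ^ 3 := by
  have hcurve := hs.isBigO_curve_sub hf hf0
  have hcurve_sq : h =O[𝓝 0] fun x => x ^ 2 := by
    simpa using (hcurve.trans (isLittleO_pow_pow (by norm_num : 2 < 3)).isBigO).add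
      ((isBigO_refl (fun x : ℝ => x ^ 2) (𝓝 0)).const_mul_left (fderiv ℝ f 0 (1, 0) / 2))
  have hexp : (fun x => Real.exp (-B x) - 1) =O[𝓝 0] fun x => x := by
    simpa [hs.exponent_zero] using hs.exponent.hasDerivAt.neg.exp.differentiableAt.isBigO_sub
  refine ((hcurve_sq.mul hexp).add hcurve).congr (fun x => ?_) fun x => ?_
  · simp only [rescaledGap]; ring
  · ring

lemma isBigO_gap_rescaledGap (hs : IsVariationalSolution f h B) :
    (fun q : ℝ × ℝ => h q.1 - q.2) =O[𝓝 0] rescaledGap h B := by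
  have hexp : (fun q : ℝ × ℝ => (Real.exp (-B q.1))⁻¹) =O[𝓝 0] fun _ => (1 : ℝ) :=
    (hs.tendsto_exp_neg_exponent.inv₀ one_ne_zero).isBigO_one ℝ
  refine ((isBigO_refl (rescaledGap h B) _).mul hexp).congr (fun q => ?_) fun q => mul_one _
  exact mul_inv_cancel_right₀ (Real.exp_ne_zero _) _

-- The variational factor cancels the term of `f (x, h x) - f (x, y)` linear in `h x - y`.
lemma isBigO_fderiv_rescaledGap (hs : IsVariationalSolution f h B) (hf : ContDiffAt ℝ 2 f 0) :
    (fun q => fderiv ℝ (rescaledGap h B) q (1, f q)) =O[𝓝 0] fun q => rescaledGap h B q ^ 2 := by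
  have hpair : Tendsto (fun q : ℝ × ℝ => (q, (q.1, h q.1))) (𝓝 0) (𝓝 (0, 0)) :=
    tendsto_id.prodMk_nhds (hs.tendsto_graph.comp (continuous_fst.tendsto 0))
  have htaylor : (fun q : ℝ × ℝ => f q - f (q.1, h q.1) -
      fderiv ℝ f (q.1, h q.1) (0, 1) * (q.2 - h q.1)) =O[𝓝 0] fun q => (h q.1 - q.2) ^ 2 := by
    refine ((isBigO_sub_sub_fderiv_norm_sq hf).comp_tendsto hpair).congr (fun q => ?_) fun q => ?_
    · have hdiff : q - (q.1, h q.1) = (q.2 - h q.1) • ((0 : ℝ), (1 : ℝ)) := by ext <;> simp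
      simp only [Function.comp_apply, hdiff, map_smul, smul_eq_mul, mul_comm]
    · simp [Prod.norm_def, sub_sq_comm]
  have hexp := (hs.tendsto_exp_neg_exponent.isBigO_one ℝ).neg_left
  refine ((hexp.mul htaylor).congr' ?_ (.of_forall fun q => one_mul _)).trans
    (hs.isBigO_gap_rescaledGap.pow 2)
  filter_upwards [hs.eventually_hasFDerivAt_rescaledGap] with q hq
  rw [hq.fderiv]
  simp only [neg_mul, smul_apply, sub_apply, ContinuousLinearMap.coe_fst', smul_eq_mul, mul_one,
    ContinuousLinearMap.coe_snd']
  ring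

lemma eventually_slope_pos (hs : IsVariationalSolution f h B) (hf : DifferentiableAt ℝ f 0)
    (hf0 : f 0 = 0) (ha : 0 < fderiv ℝ f 0 (1, 0)) : ∀ᶠ x in 𝓝[>] 0, 0 < f (x, h x) := by
  have hsign := eventually_nhdsWithin_sign_eq_of_deriv_pos
    (by rwa [(hs.hasDerivAt_slope_graph hf hf0).deriv]) (by rw [hs.graph_zero, hf0])
  filter_upwards [hsign.filter_mono nhdsWithin_le_nhds, self_mem_nhdsWithin] with x hx hx0
  rwa [sub_zero, sign_pos (mem_Ioi.1 hx0), sign_eq_one_iff] at hx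

lemma eventually_strictMonoOn_curve (hs : IsVariationalSolution f h B)
    (hf : DifferentiableAt ℝ f 0) (hf0 : f 0 = 0) (ha : 0 < fderiv ℝ f 0 (1, 0)) :
    ∀ᶠ r in 𝓝[>] 0, StrictMonoOn h (Icc 0 r) := by
  obtain ⟨ε, hε, hsub⟩ := mem_nhdsGT_iff_exists_Ioo_subset.1
    ((hs.curve.filter_mono nhdsWithin_le_nhds).and (hs.eventually_slope_pos hf hf0 ha))
  filter_upwards [Ioo_mem_nhdsGT hε] with r hr
  have hcont : ContinuousOn h (Icc 0 r) := fun x hx => by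
    rcases hx.1.eq_or_lt with rfl | hx0
    · exact hs.curve.continuousAt.continuousWithinAt
    · exact (hsub ⟨hx0, hx.2.trans_lt hr.2⟩).1.continuousAt.continuousWithinAt
  have hinterior : interior (Icc 0 r) ⊆ Ioo 0 ε := by
    rw [interior_Icc]
    exact Ioo_subset_Ioo_right hr.2.le
  exact strictMonoOn_of_hasDerivWithinAt_pos (convex_Icc 0 r) hcont
    (fun x hx => (hsub (hinterior hx)).1.hasDerivWithinAt) fun x hx => (hsub (hinterior hx)).2

lemma exists_mem_Ioo_hasDerivAt_section_pos (hs : IsVariationalSolution f h B)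
    (hf : ContDiffAt ℝ 2 f 0) (hf0 : f 0 = 0) (ha : 0 < fderiv ℝ f 0 (1, 0)) {r : ℝ} (hr : 0 < r) :
    ∃ p ∈ Ioo 0 r, h p < r ∧ ContDiffAt ℝ 2 (fun x => rescaledGap h B (x, h p)) p ∧
      ∃ κ > 0, HasDerivAt (fun x => rescaledGap h B (x, h p)) κ p := by
  have hIoo : ∀ᶠ p in 𝓝[>] 0, p ∈ Ioo 0 r := Ioo_mem_nhdsGT hr
  have hlocal : ∀ᶠ p in 𝓝 0, h p < r ∧ HasDerivAt h (f (p, h p)) p ∧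
      HasDerivAt B (fderiv ℝ f (p, h p) (0, 1)) p ∧ ContDiffAt ℝ 2 h p ∧ ContDiffAt ℝ 2 B p :=
    (hs.curve.continuousAt.eventually_lt_const (by rwa [hs.curve_zero])).and <|
      hs.curve.and <| hs.exponent.and <|
      ((hs.contDiffAt_curve (hf.of_le one_le_two)).eventually (by simp)).and <|
      (hs.contDiffAt_exponent hf).eventually (by simp)
  obtain ⟨p, hp, hslope, hpr, hh, hB, hhC, hBC⟩ := (hIoo.and
    ((hs.eventually_slope_pos (hf.differentiableAt two_ne_zero) hf0 ha).and
      (hlocal.filter_mono nhdsWithin_le_nhds))).exists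
  exact ⟨p, hp, hpr, contDiffAt_rescaledGap_section hhC hBC (h p), _,
    mul_pos hslope (Real.exp_pos _), hasDerivAt_rescaledGap_section hh hB⟩

end IsVariationalSolution

/-- The solution of `γ' = X ∘ γ` starting at `q` stays in `U` and first reaches the height `ξ` at
the positive time `T`. -/
structure IsTransit (U : Set (ℝ × ℝ)) (X : ℝ × ℝ → ℝ × ℝ) (q : ℝ × ℝ) (ξ T : ℝ)
    (γ : ℝ → ℝ × ℝ) : Prop where
  pos : 0 < T
  start : γ 0 = q
  mem : ∀ t ∈ Icc 0 T, γ t ∈ U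
  isIntegralCurveOn : IsIntegralCurveOn γ (fun _ => X) (Icc 0 T)
  snd_eq : (γ T).2 = ξ
  snd_lt : ∀ t ∈ Ico 0 T, (γ t).2 < ξ

lemma IsTransit.snd_le {U : Set (ℝ × ℝ)} {X : ℝ × ℝ → ℝ × ℝ} {q : ℝ × ℝ} {ξ T : ℝ}
    {γ : ℝ → ℝ × ℝ} (hγ : IsTransit U X q ξ T γ) : ∀ t ∈ Icc 0 T, (γ t).2 ≤ ξ := fun t ht =>
  ht.2.eq_or_lt.elim (fun h => h ▸ hγ.snd_eq.le) fun h => (hγ.snd_lt t ⟨ht.1, h⟩).le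

/-- A square around a visible fold point at the origin on which `X` moves to the right at speed
at least `m` and `Φ` is a first integral of `X` up to `K * Φ ^ 2`. The graph of the increasing
function `h` stands for the trajectory through the fold point, whose distance `Φ` controls. -/
structure IsFoldSquare (X : ℝ × ℝ → ℝ × ℝ) (Φ : ℝ × ℝ → ℝ) (h : ℝ → ℝ) (m K L r : ℝ) :
    Prop where
  speed_pos : 0 < m
  drift_nonneg : 0 ≤ K
  gap_nonneg : 0 ≤ L
  curve_zero : h 0 = 0
  strictMonoOn : StrictMonoOn h (Icc 0 r)
  le_fst : ∀ q ∈ closedBall 0 r, m ≤ (X q).1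
  differentiableAt : ∀ q ∈ closedBall 0 r, DifferentiableAt ℝ Φ q
  abs_fderiv_le : ∀ q ∈ closedBall 0 r, |fderiv ℝ Φ q (X q)| ≤ K * Φ q ^ 2
  abs_le_one : ∀ q ∈ closedBall 0 r, |Φ q| ≤ 1
  abs_sub_le : ∀ q ∈ closedBall 0 r, |h q.1 - q.2| ≤ L * |Φ q|

/-- Bound from Gronwall's inequality for the variation of `Φ` along a trajectory in an
`IsFoldSquare`, relative to the squared initial value of `Φ`. The trajectory takes time at most
`r / m`. -/
noncomputable def driftConst (m K r : ℝ) : ℝ :=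
  K * (r / m) * Real.exp (K * (r / m)) ^ 2

/-- Bound for the vertical distance to `h` along the trajectory that starts at `q`. -/
noncomputable def gapBound (Φ : ℝ × ℝ → ℝ) (m K L r : ℝ) (q : ℝ × ℝ) : ℝ :=
  L * (|Φ q| + driftConst m K r * Φ q ^ 2)

lemma tendsto_prodMk_zero_nhdsGE :
    Tendsto (fun x : ℝ => (x, (0 : ℝ))) (𝓝[≥] 0) (𝓝 0) :=
  ((continuous_id.prodMk continuous_const).tendsto' 0 0 rfl).mono_left nhdsWithin_le_nhds

lemma eventually_gapBound_lt {Φ : ℝ × ℝ → ℝ} (m K L r : ℝ) {q₀ : ℝ × ℝ}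
    (hΦ : Tendsto Φ (𝓝 q₀) (𝓝 0)) {c : ℝ} (hc : 0 < c) :
    ∀ᶠ q in 𝓝 q₀, gapBound Φ m K L r q < c := by
  have hlim : Tendsto (fun q => gapBound Φ m K L r q) (𝓝 q₀) (𝓝 0) := by
    simpa [gapBound] using
      (hΦ.abs.add ((hΦ.pow 2).const_mul (driftConst m K r))).const_mul L
  exact hlim.eventually_lt_const hc

namespace IsFoldSquare

variable {X : ℝ × ℝ → ℝ × ℝ} {Φ : ℝ × ℝ → ℝ} {h : ℝ → ℝ} {m K L r T : ℝ} {γ : ℝ → ℝ × ℝ}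

lemma add_mul_le_fst (hQ : IsFoldSquare X Φ h m K L r)
    (hγ : IsIntegralCurveOn γ (fun _ => X) (Icc 0 T)) (hmem : ∀ t ∈ Icc 0 T, γ t ∈ closedBall 0 r) :
    ∀ t ∈ Icc 0 T, (γ 0).1 + m * t ≤ (γ t).1 := by
  intro t ht
  have hfst : ∀ s ∈ Icc 0 T, HasDerivWithinAt (fun s => (γ s).1) (X (γ s)).1 (Icc 0 T) s :=
    fun s hs => (ContinuousLinearMap.fst ℝ ℝ ℝ).hasFDerivAt.comp_hasDerivWithinAt s (hγ s hs)
  have hderiv : ∀ s ∈ interior (Icc 0 T), HasDerivAt (fun s => (γ s).1) (X (γ s)).1 s :=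
    fun s hs => (hfst s (interior_subset hs)).hasDerivAt (mem_interior_iff_mem_nhds.1 hs)
  have hmvt := (convex_Icc 0 T).mul_sub_le_image_sub_of_le_deriv
    (fun s hs => (hfst s hs).continuousWithinAt)
    (fun s hs => (hderiv s hs).differentiableAt.differentiableWithinAt)
    (fun s hs => (hderiv s hs).deriv.symm ▸ hQ.le_fst _ (hmem s (interior_subset hs)))
    0 ⟨le_rfl, ht.1.trans ht.2⟩ t ht ht.1
  linarith

lemma fst_mem_Icc (hQ : IsFoldSquare X Φ h m K L r)
    (hγ : IsIntegralCurveOn γ (fun _ => X) (Icc 0 T)) (hmem : ∀ t ∈ Icc 0 T, γ t ∈ closedBall 0 r)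
    (h0 : 0 ≤ (γ 0).1) : ∀ t ∈ Icc 0 T, (γ t).1 ∈ Icc 0 r := by
  intro t ht
  have hright := hQ.add_mul_le_fst hγ hmem t ht
  have hnorm : ‖γ t‖ ≤ r := mem_closedBall_zero_iff.1 (hmem t ht)
  exact ⟨by linarith [mul_nonneg hQ.speed_pos.le ht.1],
    (le_abs_self _).trans ((norm_fst_le _).trans hnorm)⟩

lemma le_div_of_forall_mem (hQ : IsFoldSquare X Φ h m K L r)
    (hγ : IsIntegralCurveOn γ (fun _ => X) (Icc 0 T)) (hmem : ∀ t ∈ Icc 0 T, γ t ∈ closedBall 0 r)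
    (h0 : 0 ≤ (γ 0).1) (hT : 0 ≤ T) : T ≤ r / m := by
  have hTmem : T ∈ Icc 0 T := ⟨hT, le_rfl⟩
  rw [le_div_iff₀' hQ.speed_pos]
  linarith [hQ.add_mul_le_fst hγ hmem T hTmem, (hQ.fst_mem_Icc hγ hmem h0 T hTmem).2]

lemma abs_sub_le_of_forall_mem (hQ : IsFoldSquare X Φ h m K L r)
    (hγ : IsIntegralCurveOn γ (fun _ => X) (Icc 0 T)) (hmem : ∀ t ∈ Icc 0 T, γ t ∈ closedBall 0 r)
    (h0 : 0 ≤ (γ 0).1) (hT : 0 ≤ T) :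
    |Φ (γ T) - Φ (γ 0)| ≤ driftConst m K r * Φ (γ 0) ^ 2 := by
  have hderiv : ∀ t ∈ Icc 0 T,
      HasDerivWithinAt (Φ ∘ γ) (fderiv ℝ Φ (γ t) (X (γ t))) (Icc 0 T) t := fun t ht =>
    (hQ.differentiableAt _ (hmem t ht)).hasFDerivAt.comp_hasDerivWithinAt t (hγ t ht)
  have hTle : T ≤ r / m := hQ.le_div_of_forall_mem hγ hmem h0 hT
  have hK := hQ.drift_nonneg
  have hrm : 0 ≤ r / m := hT.trans hTle
  calc |Φ (γ T) - Φ (γ 0)| ≤ K * T * Real.exp (K * 1 * T) ^ 2 * Φ (γ 0) ^ 2 :=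
        abs_sub_le_of_abs_deriv_le_sq hK hderiv (fun t ht => hQ.abs_fderiv_le _ (hmem t ht))
          (fun t ht => hQ.abs_le_one _ (hmem t ht)) T ⟨hT, le_rfl⟩
    _ ≤ driftConst m K r * Φ (γ 0) ^ 2 := by
        rw [mul_one, driftConst]
        gcongr

lemma abs_gap_le_of_forall_mem (hQ : IsFoldSquare X Φ h m K L r)
    (hγ : IsIntegralCurveOn γ (fun _ => X) (Icc 0 T)) (hmem : ∀ t ∈ Icc 0 T, γ t ∈ closedBall 0 r)
    (h0 : 0 ≤ (γ 0).1) (hT : 0 ≤ T) :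
    |h (γ T).1 - (γ T).2| ≤ gapBound Φ m K L r (γ 0) := by
  have hL := hQ.gap_nonneg
  have hdrift := hQ.abs_sub_le_of_forall_mem hγ hmem h0 hT
  refine (hQ.abs_sub_le _ (hmem T ⟨hT, le_rfl⟩)).trans ?_
  rw [gapBound]
  gcongr
  linarith [abs_sub_abs_le_abs_sub (Φ (γ T)) (Φ (γ 0))]

-- At height at most `h p` the graph of `h` meets neither the right nor the lower side of the
-- square, and the trajectory stays close to it.
lemma forall_mem_closedBall (hQ : IsFoldSquare X Φ h m K L r) {p : ℝ} (hp : p ∈ Ioo 0 r)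
    (hpr : h p < r) (hγ : IsIntegralCurveOn γ (fun _ => X) (Icc 0 T))
    (hstart : γ 0 ∈ closedBall 0 r) (h0 : 0 ≤ (γ 0).1) (hle : ∀ t ∈ Icc 0 T, (γ t).2 ≤ h p)
    (hsmall : gapBound Φ m K L r (γ 0) < min (h r - h p) r) :
    ∀ t ∈ Icc 0 T, γ t ∈ closedBall 0 r := by
  refine forall_mem_of_forall_mem_interior hγ.continuousOn isClosed_closedBall hstart
    fun t ht hmem => ball_subset_interior_closedBall ?_
  have hγt : IsIntegralCurveOn γ (fun _ => X) (Icc 0 t) := hγ.mono (Icc_subset_Icc_right ht.2.le)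
  have hr : 0 < r := hp.1.trans hp.2
  have hgap := (hQ.abs_gap_le_of_forall_mem hγt hmem h0 ht.1).trans_lt hsmall
  obtain ⟨hgap_right, hgap_low⟩ := lt_min_iff.1 hgap
  obtain ⟨hfst_nonneg, hfst_le⟩ := hQ.fst_mem_Icc hγt hmem h0 t ⟨ht.1, le_rfl⟩
  have hsnd_le : (γ t).2 ≤ h p := hle t (Ico_subset_Icc_self ht)
  have hfst_lt : (γ t).1 < r := hfst_le.lt_of_ne fun hfst => by
    rw [hfst] at hgap_right
    linarith [le_abs_self (h r - (γ t).2)]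
  have hcurve_nonneg : 0 ≤ h (γ t).1 := by
    simpa only [hQ.curve_zero] using
      hQ.strictMonoOn.monotoneOn (left_mem_Icc.2 hr.le) ⟨hfst_nonneg, hfst_le⟩ hfst_nonneg
  have hsnd_gt : -r < (γ t).2 := by linarith [le_abs_self (h (γ t).1 - (γ t).2)]
  rw [mem_ball_zero_iff, Prod.norm_def, max_lt_iff, Real.norm_eq_abs, Real.norm_eq_abs, abs_lt,
    abs_lt]
  exact ⟨⟨by linarith, hfst_lt⟩, hsnd_gt, hsnd_le.trans_lt hpr⟩

lemma exists_isTransit (hQ : IsFoldSquare X Φ h m K L r) {U : Set (ℝ × ℝ)}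
    (hU : closedBall 0 r ⊆ U) {p τ : ℝ} (hp : p ∈ Ioo 0 r) (hpr : h p < r) (hτ : r / m < τ)
    (hγ : IsIntegralCurveOn γ (fun _ => X) (Icc 0 τ)) (hstart : γ 0 ∈ closedBall 0 r)
    (h0 : 0 ≤ (γ 0).1) (hlt : (γ 0).2 < h p)
    (hsmall : gapBound Φ m K L r (γ 0) < min (h r - h p) r) :
    ∃ T, IsTransit U X (γ 0) (h p) T γ := by
  have hτ0 : 0 ≤ τ := (div_nonneg (hp.1.trans hp.2).le hQ.speed_pos.le).trans hτ.le
  obtain ⟨s, hs, hps⟩ : ∃ s ∈ Icc 0 τ, h p ≤ (γ s).2 := by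
    by_contra! hbelow
    exact hτ.not_ge (hQ.le_div_of_forall_mem hγ (hQ.forall_mem_closedBall hp hpr hγ hstart h0
      (fun t ht => (hbelow t ht).le) hsmall) h0 hτ0)
  obtain ⟨T, hT, hTp, hTlt⟩ := exists_first_hit hs.1
    (continuous_snd.comp_continuousOn (hγ.continuousOn.mono (Icc_subset_Icc_right hs.2))) hlt hps
  have hγT : IsIntegralCurveOn γ (fun _ => X) (Icc 0 T) :=
    hγ.mono (Icc_subset_Icc_right (hT.2.trans hs.2))
  have hle : ∀ t ∈ Icc 0 T, (γ t).2 ≤ h p := fun t ht =>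
    ht.2.eq_or_lt.elim (fun htT => htT ▸ hTp.le) fun htT => (hTlt t ⟨ht.1, htT⟩).le
  have hmem : ∀ t ∈ Icc 0 T, γ t ∈ closedBall 0 r :=
    hQ.forall_mem_closedBall hp hpr hγT hstart h0 hle hsmall
  exact ⟨T, hT.1, rfl, fun t ht => hU (hmem t ht), hγT, hTp, hTlt⟩

lemma min_sub_pos (hQ : IsFoldSquare X Φ h m K L r) {p : ℝ} (hp : p ∈ Ioo 0 r) :
    0 < min (h r - h p) r :=
  have hr : 0 < r := hp.1.trans hp.2
  lt_min (sub_pos.2 (hQ.strictMonoOn (Ioo_subset_Icc_self hp) (right_mem_Icc.2 hr.le) hp.2)) hr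

lemma curve_pos (hQ : IsFoldSquare X Φ h m K L r) {p : ℝ} (hp : p ∈ Ioo 0 r) : 0 < h p := by
  have hr : 0 < r := hp.1.trans hp.2
  simpa only [hQ.curve_zero] using
    hQ.strictMonoOn (left_mem_Icc.2 hr.le) (Ioo_subset_Icc_self hp) hp.1

lemma eventually_exists_isTransit (hQ : IsFoldSquare X Φ h m K L r)
    (hΦ : Tendsto Φ (𝓝 0) (𝓝 0)) {U : Set (ℝ × ℝ)} (hU : closedBall 0 r ⊆ U)
    {p τ : ℝ} (hp : p ∈ Ioo 0 r) (hpr : h p < r) (hτ : r / m < τ)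
    (hflow : ∀ᶠ q in 𝓝 (0 : ℝ × ℝ),
      ∃ γ : ℝ → ℝ × ℝ, γ 0 = q ∧ IsIntegralCurveOn γ (fun _ => X) (Icc 0 τ)) :
    ∀ᶠ x in 𝓝[≥] 0, ∃ T γ, IsTransit U X (x, 0) (h p) T γ := by
  have hr : 0 < r := hp.1.trans hp.2
  have haxis := tendsto_prodMk_zero_nhdsGE
  filter_upwards [haxis.eventually (closedBall_mem_nhds 0 hr),
    haxis.eventually hflow,
    haxis.eventually (eventually_gapBound_lt m K L r hΦ (hQ.min_sub_pos hp)), self_mem_nhdsWithin]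
    with x hx ⟨γ, hγ0, hγ⟩ hsmall hx0
  rw [← hγ0] at hx hsmall ⊢
  obtain ⟨T, hT⟩ := hQ.exists_isTransit hU hp hpr hτ hγ hx (by simpa only [hγ0] using mem_Ici.1 hx0)
    (by simpa only [hγ0] using hQ.curve_pos hp) hsmall
  exact ⟨T, γ, hT⟩

lemma exists_eventually_abs_sub_sub_le (hQ : IsFoldSquare X Φ h m K L r) {p β κ : ℝ}
    (hp : p ∈ Ioo 0 r) (hpr : h p < r) (hΦp : Φ (p, h p) = 0)
    (hΦ : Tendsto Φ (𝓝 0) (𝓝 0))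
    (hβ : (fun x => Φ (x, 0) - β * x ^ 2) =O[𝓝 0] fun x => x ^ 3)
    (hC : ContDiffAt ℝ 2 (fun x => Φ (x, h p)) p)
    (hκ : HasDerivAt (fun x => Φ (x, h p)) κ p) (hκ0 : κ ≠ 0) :
    ∃ C > 0, ∀ᶠ x in 𝓝[≥] 0, ∀ U T γ, IsTransit U X (x, 0) (h p) T γ →
      |(γ T).1 - p - β / κ * x ^ 2| ≤ C * x ^ 3 := by
  have hr : 0 < r := hp.1.trans hp.2
  obtain ⟨C, hCpos, hexp⟩ := exists_forall_abs_sub_sub_le_mul_abs_pow_three (driftConst m K r)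
    hβ hC hκ hκ0 hΦp
  obtain ⟨N₀, hN₀, Np, hNp, hN⟩ := mem_nhds_prod_iff.1 hexp
  obtain ⟨c, hc, hcN⟩ := exists_pos_forall_abs_sub_lt_mem hQ.strictMonoOn hp hNp
  refine ⟨C, hCpos, ?_⟩
  have haxis := tendsto_prodMk_zero_nhdsGE
  filter_upwards [haxis.eventually (closedBall_mem_nhds 0 hr),
    nhdsWithin_le_nhds hN₀, self_mem_nhdsWithin,
    haxis.eventually (eventually_gapBound_lt m K L r hΦ (lt_min (hQ.min_sub_pos hp) hc))]
    with x hxr hxN hx0 hsmall U T γ hγ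
  have hode := hγ.isIntegralCurveOn
  obtain ⟨hsmall, hsmall_c⟩ := lt_min_iff.1 hsmall
  have h0 : 0 ≤ (γ 0).1 := by simpa only [hγ.start] using mem_Ici.1 hx0
  have hmem : ∀ t ∈ Icc 0 T, γ t ∈ closedBall 0 r :=
    hQ.forall_mem_closedBall hp hpr hode (by rwa [hγ.start]) h0 hγ.snd_le (by rwa [hγ.start])
  have hgap := hQ.abs_gap_le_of_forall_mem hode hmem h0 hγ.pos.le
  have hdrift := hQ.abs_sub_le_of_forall_mem hode hmem h0 hγ.pos.le
  have hγT : γ T = ((γ T).1, h p) := Prod.ext rfl hγ.snd_eq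
  rw [hγ.start, hγ.snd_eq] at hgap
  rw [hγ.start, hγT] at hdrift
  have hρ : (γ T).1 ∈ Icc 0 r := hQ.fst_mem_Icc hode hmem h0 T ⟨hγ.pos.le, le_rfl⟩
  simpa only [abs_of_nonneg (mem_Ici.1 hx0)] using
    hN (mk_mem_prod hxN (hcN _ hρ (hgap.trans_lt hsmall_c))) hdrift

end IsFoldSquare

/-- The slope `X² / X¹` of a planar vector field, so that its trajectories are the graphs of the
solutions of `y' = graphSlope X (x, y)` wherever `X¹ ≠ 0`. -/
noncomputable def graphSlope (X : ℝ × ℝ → ℝ × ℝ) (q : ℝ × ℝ) : ℝ :=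
  (X q).2 / (X q).1

section VisibleFold

variable {X : ℝ × ℝ → ℝ × ℝ} {h B : ℝ → ℝ}

lemma fst_smul_one_graphSlope {q : ℝ × ℝ} (hq : (X q).1 ≠ 0) :
    (X q).1 • ((1 : ℝ), graphSlope X q) = X q :=
  Prod.ext (mul_one _) (mul_div_cancel₀ _ hq)

lemma graphSlope_eq_zero {q : ℝ × ℝ} (hX2 : (X q).2 = 0) : graphSlope X q = 0 := by
  rw [graphSlope, hX2, zero_div]

lemma contDiffAt_graphSlope {n : WithTop ℕ∞} {q : ℝ × ℝ} (hX : ContDiffAt ℝ n X q)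
    (hq : (X q).1 ≠ 0) : ContDiffAt ℝ n (graphSlope X) q :=
  hX.snd.div hX.fst hq

lemma fderiv_graphSlope_apply_pos {q v : ℝ × ℝ} (hX : DifferentiableAt ℝ X q)
    (hX2 : (X q).2 = 0) (hX2v : 0 < fderiv ℝ (fun q => (X q).2) q v) (hX1 : 0 < (X q).1) :
    0 < fderiv ℝ (graphSlope X) q v := by
  have hderiv : HasFDerivAt (graphSlope X) _ q :=
    hasFDerivAt_div_of_eq_zero hX.snd.hasFDerivAt hX.fst hX1.ne' hX2
  rw [hderiv.fderiv]
  exact mul_pos (inv_pos.2 hX1) hX2v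

lemma isBigO_fderiv_rescaledGap_vectorField (hX : ContDiffAt ℝ 2 X 0) (hX1 : 0 < (X 0).1)
    (hs : IsVariationalSolution (graphSlope X) h B) :
    (fun q => fderiv ℝ (rescaledGap h B) q (X q)) =O[𝓝 0] fun q => rescaledGap h B q ^ 2 := by
  have hfst : Tendsto (fun q => (X q).1) (𝓝 0) (𝓝 (X 0).1) := hX.fst.continuousAt
  refine ((hfst.isBigO_one ℝ).mul (hs.isBigO_fderiv_rescaledGap
    (contDiffAt_graphSlope hX hX1.ne'))).congr' ?_ (.of_forall fun q => one_mul _)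
  filter_upwards [hfst.eventually_ne hX1.ne'] with q hq
  rw [← smul_eq_mul, ← map_smul, fst_smul_one_graphSlope hq]

lemma exists_eventually_isFoldSquare (hX : ContDiffAt ℝ 2 X 0) (hX1 : 0 < (X 0).1)
    (hs : IsVariationalSolution (graphSlope X) h B) (hf0 : graphSlope X 0 = 0)
    (ha : 0 < fderiv ℝ (graphSlope X) 0 (1, 0)) :
    ∃ m > 0, ∃ K L, ∀ᶠ r in 𝓝[>] 0, IsFoldSquare X (rescaledGap h B) h m K L r := by
  obtain ⟨K, hK, hdrift⟩ := (isBigO_fderiv_rescaledGap_vectorField hX hX1 hs).exists_nonneg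
  obtain ⟨L, hL, hgap⟩ := hs.isBigO_gap_rescaledGap.exists_nonneg
  have hfst : ∀ᶠ q in 𝓝 0, (X 0).1 / 2 < (X q).1 :=
    hX.fst.continuousAt.eventually_const_lt (half_lt_self hX1)
  have hone : ∀ᶠ q in 𝓝 0, |rescaledGap h B q| < 1 := by
    have hlim := hs.tendsto_rescaledGap.abs
    rw [abs_zero] at hlim
    exact hlim.eventually_lt_const one_pos
  have hsquare := eventually_closedBall_subset
    (hfst.and (hs.eventually_hasFDerivAt_rescaledGap.and (hdrift.bound.and (hone.and hgap.bound))))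
  refine ⟨(X 0).1 / 2, half_pos hX1, K, L, ?_⟩
  filter_upwards [hsquare.filter_mono nhdsWithin_le_nhds,
    hs.eventually_strictMonoOn_curve
      ((contDiffAt_graphSlope hX hX1.ne').differentiableAt two_ne_zero) hf0 ha] with r hball hmono
  exact
    { speed_pos := half_pos hX1
      drift_nonneg := hK
      gap_nonneg := hL
      curve_zero := hs.curve_zero
      strictMonoOn := hmono
      le_fst := fun q hq => (hball hq).1.le
      differentiableAt := fun q hq => (hball hq).2.1.differentiableAt
      abs_fderiv_le := fun q hq => by simpa using (hball hq).2.2.1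
      abs_le_one := fun q hq => (hball hq).2.2.2.1.le
      abs_sub_le := fun q hq => (hball hq).2.2.2.2 }

lemma exists_isFoldSquare (hX : ContDiffAt ℝ 2 X 0) (hX1 : 0 < (X 0).1)
    (hs : IsVariationalSolution (graphSlope X) h B) (hf0 : graphSlope X 0 = 0)
    (ha : 0 < fderiv ℝ (graphSlope X) 0 (1, 0)) {U : Set (ℝ × ℝ)} (hU : U ∈ 𝓝 0) {τ : ℝ}
    (hτ : 0 < τ) :
    ∃ m K L r, 0 < r ∧ r / m < τ ∧ closedBall 0 r ⊆ U ∧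
      IsFoldSquare X (rescaledGap h B) h m K L r := by
  obtain ⟨m, hm, K, L, hQ⟩ := exists_eventually_isFoldSquare hX hX1 hs hf0 ha
  obtain ⟨r, hr, hrU, hrτ, hQr⟩ := (eventually_mem_nhdsWithin.and
    (((eventually_closedBall_subset hU).filter_mono nhdsWithin_le_nhds).and
    ((eventually_nhdsWithin_of_eventually_nhds
      (eventually_lt_nhds (mul_pos hτ hm))).and hQ))).exists
  exact ⟨m, K, L, r, hr, (div_lt_iff₀ hm).2 hrτ, hrU, hQr⟩

end VisibleFold

theorem stmt_0_general {U : Set (ℝ × ℝ)} (hU : U ∈ 𝓝 0) {X : ℝ × ℝ → ℝ × ℝ}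
    (hX : ContDiffAt ℝ 2 X 0) (hX2 : (X 0).2 = 0)
    (hX2x : 0 < fderiv ℝ (fun q => (X q).2) 0 (1, 0)) (hX1 : 0 < (X 0).1) :
    ∃ ξ > 0, ∃ p, ∃ l > 0, ∃ C > 0, ∀ᶠ x₀ in 𝓝[≥] (0 : ℝ),
      (∃ T γ, IsTransit U X (x₀, 0) ξ T γ) ∧
        ∀ T γ, IsTransit U X (x₀, 0) ξ T γ → |(γ T).1 - p - l * x₀ ^ 2| ≤ C * x₀ ^ 3 := by
  have hf : ContDiffAt ℝ 2 (graphSlope X) 0 := contDiffAt_graphSlope hX hX1.ne'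
  have hf0 : graphSlope X 0 = 0 := graphSlope_eq_zero hX2
  have ha : 0 < fderiv ℝ (graphSlope X) 0 (1, 0) :=
    fderiv_graphSlope_apply_pos (hX.differentiableAt two_ne_zero) hX2 hX2x hX1
  obtain ⟨h, B, hs⟩ := exists_isVariationalSolution hf
  obtain ⟨τ, hτ, hflow⟩ :=
    exists_pos_eventually_exists_isIntegralCurveOn (hX.of_le one_le_two)
  obtain ⟨m, K, L, r, hr, hrτ, hrU, hQ⟩ := exists_isFoldSquare hX hX1 hs hf0 ha hU hτ
  obtain ⟨p, hp, hpr, hC, κ, hκ, hκp⟩ := hs.exists_mem_Ioo_hasDerivAt_section_pos hf hf0 ha hr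
  obtain ⟨C, hC0, hexp⟩ := hQ.exists_eventually_abs_sub_sub_le hp hpr (by simp [rescaledGap])
    hs.tendsto_rescaledGap (hs.isBigO_rescaledGap_section_sub hf hf0) hC hκp hκ.ne'
  refine ⟨h p, hQ.curve_pos hp, p, _, div_pos (half_pos ha) hκ, C, hC0, ?_⟩
  filter_upwards [hexp, hQ.eventually_exists_isTransit hs.tendsto_rescaledGap hrU hp hpr hrτ hflow]
    with x₀ hbound hexists
  exact ⟨hexists, fun T γ hγ => hbound U T γ hγ⟩

/- STATEMENT 0: well-definedness and quadratic expansion of the transition map ρ₁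
from the switching line Σ = {y = 0} to the section Σ⁺ = {y = ξ}, for a C³ vector
field X = (X¹, X²) with a visible fold at the origin and flow moving rightwards. -/
theorem stmt_0 (U : Set (ℝ × ℝ)) (hU : IsOpen U) (hU0 : ((0 : ℝ), (0 : ℝ)) ∈ U)
    (X : ℝ × ℝ → ℝ × ℝ) (hX : ContDiffOn ℝ 3 X U)
    (hfold : (X (0, 0)).2 = 0)
    (hXx : fderiv ℝ (fun p => (X p).2) (0, 0) (1, 0) > 0)
    (hX1 : (X (0, 0)).1 > 0) :
    ∃ ξ > (0 : ℝ), ∃ δ > (0 : ℝ), ∃ p : ℝ, ∃ l > (0 : ℝ), ∃ C > (0 : ℝ),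
      ∀ x₀ ∈ Set.Ico (0 : ℝ) δ,
        -- (i) existence of a trajectory from (x₀,0) reaching {y = ξ} for the first time
        (∃ T > (0 : ℝ), ∃ γ : ℝ → ℝ × ℝ,
          γ 0 = (x₀, 0) ∧
          (∀ t ∈ Set.Icc (0 : ℝ) T, γ t ∈ U) ∧
          (∀ t ∈ Set.Icc (0 : ℝ) T, HasDerivWithinAt γ (X (γ t)) (Set.Icc 0 T) t) ∧
          (γ T).2 = ξ ∧ (∀ t ∈ Set.Ico (0 : ℝ) T, (γ t).2 < ξ)) ∧
        -- (ii) any such trajectory hits Σ⁺ at ρ₁(x₀) = p + l·x₀² + O(x₀³), with l > 0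
        (∀ (T : ℝ) (γ : ℝ → ℝ × ℝ), 0 < T →
          γ 0 = (x₀, 0) →
          (∀ t ∈ Set.Icc (0 : ℝ) T, γ t ∈ U) →
          (∀ t ∈ Set.Icc (0 : ℝ) T, HasDerivWithinAt γ (X (γ t)) (Set.Icc 0 T) t) →
          (γ T).2 = ξ → (∀ t ∈ Set.Ico (0 : ℝ) T, (γ t).2 < ξ) →
          |(γ T).1 - p - l * x₀ ^ 2| ≤ C * x₀ ^ 3) := by
  have hU0' : U ∈ 𝓝 0 := hU.mem_nhds hU0
  obtain ⟨ξ, hξ, p, l, hl, C, hC, hρ⟩ :=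
    stmt_0_general hU0' ((hX.contDiffAt hU0').of_le (by norm_num)) hfold hXx hX1
  obtain ⟨δ, hδ, hsub⟩ := mem_nhdsGE_iff_exists_Ico_subset.1 hρ
  refine ⟨ξ, hξ, δ, hδ, p, l, hl, C, hC, fun x₀ hx₀ => ?_⟩
  obtain ⟨⟨T, γ, hT⟩, hbound⟩ := hsub hx₀
  exact ⟨⟨T, hT.pos, γ, hT.start, hT.mem, hT.isIntegralCurveOn, hT.snd_eq, hT.snd_lt⟩,
    fun T γ hpos hstart hmem hγ heq hlt => hbound T γ ⟨hpos, hstart, hmem, hγ, heq, hlt⟩⟩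
end

section
/- Let Y = (Y¹, Y²) be as in the context (visible fold of Y at (α, 0), flow moving leftwards). Then there exist ξ > 0, δ > 0, p⁻ ∈ ℝ, k₁ > 0 and C > 0 such that for every x₀ ∈ [α, α + δ): (i) there exist T < 0 and a C¹ curve γ : [T, 0] → U with γ(0) = (x₀, 0), γ'(t) = Y(γ(t)) for all t ∈ [T, 0], γ₂(T) = −ξ, and γ₂(t) > −ξ for T < t ≤ 0; and (ii) for every such pair (T, γ), |γ₁(T) − p⁻ − k₁·(x₀ − α)²| ≤ C·(x₀ − α)³. In other words, the backward transition map μ₁(x₀) = γ₁(T) from {(x,0) : α ≤ x < α + δ} to the section Σ⁻ = {y = −ξ} is well defined and satisfies μ₁(x₀) = p⁻ + k₁·(x₀ − α)² + O((x₀ − α)³) with k₁ > 0. -/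
/-!
Reversing time, the orbit `y = φ x` through the fold moves to the right and descends from the axis
with `φ' α = 0` and `φ'' α < 0`. Let `E` solve the adjoint of the linearisation of
`dy/dx = Y² / Y¹` along this orbit, with `E α = 1`. Then `H = E * (y - φ)` is almost a first
integral: its derivative along the flow is `O(H²)`, so an orbit that starts at a small value `h`
of `H` still has `H = h + O(h²)` when it crosses a section `y = φ p`. On the axis
`H (x, 0) = k * (x - α)² + O((x - α)³)` with `k = -φ'' α / 2 > 0`, and on the section `H` is an
increasing local coordinate vanishing at `p`, so the landing abscissa inherits this quadratic
expansion.
-/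

open Set Filter Topology Asymptotics

theorem forall_mem_of_continuousOn_of_isOpen {E : Type*} [TopologicalSpace E] {B : Set E}
    {γ : ℝ → E} {a b : ℝ} (hB : IsOpen B) (hγ : ContinuousOn γ (Icc a b))
    (hstep : ∀ t ∈ Icc a b, (∀ s ∈ Ico a t, γ s ∈ B) → γ t ∈ B) :
    ∀ t ∈ Icc a b, γ t ∈ B := by
  by_contra! hexit
  have hcompact : IsCompact (Icc a b ∩ γ ⁻¹' Bᶜ) :=
    isCompact_Icc.of_isClosed_subset
      (hγ.preimage_isClosed_of_isClosed isClosed_Icc hB.isClosed_compl) inter_subset_left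
  obtain ⟨t, ⟨ht, hexit_t⟩, hleast⟩ := hcompact.exists_isLeast hexit
  refine hexit_t (hstep t ht fun s hs ↦ ?_)
  by_contra hexit_s
  exact hs.2.not_ge (hleast ⟨⟨hs.1, hs.2.le.trans ht.2⟩, hexit_s⟩)

theorem exists_first_time_eq {u : ℝ → ℝ} {a b c : ℝ} (hab : a ≤ b)
    (hu : ContinuousOn u (Icc a b)) (ha : c < u a) (hb : u b ≤ c) :
    ∃ t ∈ Ioc a b, u t = c ∧ ∀ s ∈ Ico a t, c < u s := by
  have hcompact : IsCompact (Icc a b ∩ u ⁻¹' {c}) :=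
    isCompact_Icc.of_isClosed_subset
      (hu.preimage_isClosed_of_isClosed isClosed_Icc isClosed_singleton) inter_subset_left
  obtain ⟨t, ⟨ht, htc⟩, hleast⟩ := hcompact.exists_isLeast
    (intermediate_value_Icc' hab hu ⟨hb, ha.le⟩)
  refine ⟨t, ⟨ht.1.lt_of_ne fun h ↦ ha.ne' (h ▸ htc), ht.2⟩, htc, fun s hs ↦ ?_⟩
  by_contra! hsc
  obtain ⟨z, hz, hzc⟩ := intermediate_value_Icc' hs.1
    (hu.mono (Icc_subset_Icc_right (hs.2.le.trans ht.2))) ⟨hsc, ha.le⟩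
  exact (hz.2.trans_lt hs.2).not_ge (hleast ⟨⟨hz.1, hz.2.trans (hs.2.le.trans ht.2)⟩, hzc⟩)

theorem exists_pos_forall_abs_sub_lt_of_strictAntiOn {φ : ℝ → ℝ} {s : Set ℝ} {p : ℝ}
    (hφ : StrictAntiOn φ s) (hs : s ∈ 𝓝 p) {Q : ℝ → Prop} (hQ : ∀ᶠ q in 𝓝 p, Q q) :
    ∃ ε > 0, ∀ q ∈ s, |φ q - φ p| < ε → Q q := by
  obtain ⟨l, u, -, hlu, hsub⟩ := exists_Icc_mem_subset_of_mem_nhds (inter_mem hs hQ)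
  obtain ⟨hlp, hpu⟩ := Icc_mem_nhds_iff.1 hlu
  have hp : p ∈ s := mem_of_mem_nhds hs
  have hl : l ∈ s := (hsub (left_mem_Icc.2 (hlp.trans hpu).le)).1
  have hu : u ∈ s := (hsub (right_mem_Icc.2 (hlp.trans hpu).le)).1
  refine ⟨min (φ l - φ p) (φ p - φ u),
    lt_min (sub_pos.2 (hφ hl hp hlp)) (sub_pos.2 (hφ hp hu hpu)), fun q hq hqε ↦ ?_⟩
  obtain ⟨hql, hqu⟩ := lt_min_iff.1 hqε
  rw [abs_lt] at hql hqu
  have hlq : l < q := (hφ.lt_iff_gt hq hl).1 (by linarith [hql.2])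
  have hqu : q < u := (hφ.lt_iff_gt hu hq).1 (by linarith [hqu.1])
  exact (hsub ⟨hlq.le, hqu.le⟩).2

theorem isBigO_taylor_one_sub {E F : Type*} [NormedAddCommGroup E] [NormedSpace ℝ E]
    [NormedAddCommGroup F] [NormedSpace ℝ F] {f : E → F} {a : E} (hf : ContDiffAt ℝ 2 f a) :
    (fun q : E × E ↦ f q.2 - f q.1 - fderiv ℝ f q.1 (q.2 - q.1)) =O[𝓝 (a, a)]
      fun q ↦ ‖q.2 - q.1‖ ^ 2 := by
  obtain ⟨K, t, ht, hlip⟩ := (hf.fderiv_right (m := 1) (by norm_num)).exists_lipschitzOnWith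
  have hdiff : ∀ᶠ z in 𝓝 a, DifferentiableAt ℝ f z :=
    (hf.eventually (by decide)).mono fun z hz ↦ hz.differentiableAt (by norm_num)
  obtain ⟨ε, hε, hball⟩ := Metric.mem_nhds_iff.1 (inter_mem ht hdiff)
  refine IsBigO.of_bound K ?_
  filter_upwards [prod_mem_nhds (Metric.ball_mem_nhds a hε) (Metric.ball_mem_nhds a hε)]
    with q hq
  have hseg : segment ℝ q.1 q.2 ⊆ Metric.ball a ε :=
    (convex_ball a ε).segment_subset hq.1 hq.2
  have hderiv : ∀ z ∈ segment ℝ q.1 q.2,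
      ‖fderiv ℝ f z - fderiv ℝ f q.1‖ ≤ K * ‖q.2 - q.1‖ := fun z hz ↦
    (hlip.norm_sub_le (hball (hseg hz)).1 (hball hq.1).1).trans
      (by gcongr; exact norm_sub_le_of_mem_segment hz)
  have := Convex.norm_image_sub_le_of_norm_fderiv_le' (fun z hz ↦ (hball (hseg hz)).2) hderiv
    (convex_segment q.1 q.2) (left_mem_segment ℝ _ _) (right_mem_segment ℝ _ _)
  rw [norm_pow, norm_norm]
  linarith

theorem isBigO_taylor_one_sub_deriv {f : ℝ → ℝ} {a : ℝ} (hf : ContDiffAt ℝ 2 f a) :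
    (fun x ↦ f x - f a - deriv f a * (x - a)) =O[𝓝 a] fun x ↦ (x - a) ^ 2 := by
  have hpair : Tendsto (fun x : ℝ ↦ (a, x)) (𝓝 a) (𝓝 (a, a)) :=
    (Continuous.prodMk_right a).tendsto a
  simpa [Function.comp_def, mul_comm] using (isBigO_taylor_one_sub hf).comp_tendsto hpair

theorem isBigO_pow_succ_of_hasDerivAt {F : Type*} [NormedAddCommGroup F] [NormedSpace ℝ F]
    {h h' : ℝ → F} {a : ℝ} {n : ℕ}
    (hh : ∀ᶠ x in 𝓝 a, HasDerivAt h (h' x) x) (ha : h a = 0)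
    (hO : h' =O[𝓝 a] fun x ↦ (x - a) ^ n) : h =O[𝓝 a] fun x ↦ (x - a) ^ (n + 1) := by
  obtain ⟨C, hC0, hC⟩ := hO.exists_nonneg
  obtain ⟨ε, hε, hball⟩ := Metric.eventually_nhds_iff_ball.1 (hh.and hC.bound)
  refine IsBigO.of_bound C ?_
  filter_upwards [Metric.ball_mem_nhds a hε] with x hx
  have hseg : segment ℝ a x ⊆ Metric.ball a ε :=
    (convex_ball a ε).segment_subset (Metric.mem_ball_self hε) hx
  have hbound : ∀ z ∈ segment ℝ a x, ‖h' z‖ ≤ C * ‖(x - a) ^ n‖ := fun z hz ↦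
    (hball z (hseg hz)).2.trans (by
      rw [norm_pow, norm_pow]
      gcongr
      exact norm_sub_le_of_mem_segment hz)
  have := Convex.norm_image_sub_le_of_norm_hasDerivWithin_le
    (fun z hz ↦ (hball z (hseg hz)).1.hasDerivWithinAt) hbound
    (convex_segment a x) (left_mem_segment ℝ _ _) (right_mem_segment ℝ _ _)
  rwa [ha, sub_zero, mul_assoc, ← norm_mul, ← pow_succ] at this

theorem isBigO_sub_sub_div_deriv {G : ℝ → ℝ} {p : ℝ} (hG : ContDiffAt ℝ 2 G p) (hp : G p = 0)
    (hG' : deriv G p ≠ 0) :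
    (fun q ↦ q - p - G q / deriv G p) =O[𝓝 p] fun q ↦ G q ^ 2 := by
  have hTaylor := isBigO_taylor_one_sub_deriv hG
  have hinv : (fun q ↦ q - p) =O[𝓝 p] G := by
    have hderiv := (hG.differentiableAt (by norm_num)).hasDerivAt
    have hpair : Tendsto (fun q ↦ (q, p)) (𝓝 p) (𝓝 p ×ˢ pure p) :=
      tendsto_id.prodMk tendsto_const_pure
    simpa [hp, Function.comp_def] using (hderiv.isTheta_sub hG').2.comp_tendsto hpair
  refine ((hTaylor.trans (hinv.pow 2)).const_mul_left (-(deriv G p)⁻¹)).congr_left fun q ↦ ?_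
  rw [hp]
  field_simp
  ring

theorem abs_sub_le_of_abs_deriv_le_mul_sq {h h' : ℝ → ℝ} {τ K A : ℝ}
    (hh : ContinuousOn h (Icc 0 τ))
    (hderiv : ∀ t ∈ Ico 0 τ, HasDerivWithinAt h (h' t) (Ici t) t) (hK : 0 ≤ K)
    (hquad : ∀ t ∈ Ico 0 τ, |h' t| ≤ K * h t ^ 2) (hA : ∀ t ∈ Ico 0 τ, |h t| ≤ A)
    (hτ : K * A * τ ≤ 1) :
    ∀ t ∈ Icc 0 τ, |h t| ≤ 3 * |h 0| ∧ |h t - h 0| ≤ 9 * K * h 0 ^ 2 * t := by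
  -- The quadratic bound is linear with rate `K * A`, and `exp (K * A * τ) ≤ exp 1 < 3`.
  have hgronwall : ∀ t ∈ Icc 0 τ, |h t| ≤ 3 * |h 0| := fun t ht ↦ by
    have hlin : ∀ s ∈ Ico 0 τ, ‖h' s‖ ≤ K * A * ‖h s‖ + 0 := fun s hs ↦ by
      have := mul_le_mul_of_nonneg_left (hA s hs) (mul_nonneg hK (abs_nonneg (h s)))
      rw [Real.norm_eq_abs, Real.norm_eq_abs]
      nlinarith [hquad s hs, sq_abs (h s)]
    have hbound := norm_le_gronwallBound_of_norm_deriv_right_le hh hderiv le_rfl hlin t ht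
    rw [gronwallBound_ε0, sub_zero, mul_comm] at hbound
    have hexp : Real.exp (K * A * t) ≤ 3 := by
      refine (Real.exp_le_exp.2 ?_).trans Real.exp_one_lt_three.le
      rcases le_total 0 (K * A) with hKA | hKA
      · exact (mul_le_mul_of_nonneg_left ht.2 hKA).trans hτ
      · exact (mul_nonpos_of_nonpos_of_nonneg hKA ht.1).trans zero_le_one
    exact hbound.trans (mul_le_mul_of_nonneg_right hexp (abs_nonneg _))
  refine fun t ht ↦ ⟨hgronwall t ht, ?_⟩
  have hspeed : ∀ s ∈ Ico 0 τ, ‖h' s‖ ≤ 9 * K * h 0 ^ 2 := fun s hs ↦ calc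
    ‖h' s‖ ≤ K * |h s| ^ 2 := by rw [sq_abs]; exact hquad s hs
    _ ≤ K * (3 * |h 0|) ^ 2 := by gcongr; exact hgronwall s (Ico_subset_Icc_self hs)
    _ = 9 * K * h 0 ^ 2 := by rw [mul_pow, sq_abs]; ring
  simpa using norm_image_sub_le_of_norm_deriv_right_le_segment hh hderiv hspeed t ht

section NonautonomousODE

variable {F : Type*} [NormedAddCommGroup F] [NormedSpace ℝ F] {f : ℝ × F → F} {a : ℝ}

theorem exists_eventually_hasDerivAt_of_contDiffAt [CompleteSpace F] {y : F}
    (hf : ContDiffAt ℝ 1 f (a, y)) :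
    ∃ φ : ℝ → F, φ a = y ∧ ∀ᶠ x in 𝓝 a, HasDerivAt φ (f (x, φ x)) x := by
  have hsuspension : ContDiffAt ℝ 1 (fun p : ℝ × F ↦ ((1 : ℝ), f p)) (a, y) :=
    contDiffAt_const.prodMk hf
  obtain ⟨γ, hγa, ε, hε, hγ⟩ :=
    hsuspension.exists_forall_mem_closedBall_exists_eq_forall_mem_Ioo_hasDerivAt₀ a
  have hfst : ∀ t ∈ Ioo (a - ε) (a + ε), HasDerivAt (fun s ↦ (γ s).1) 1 t :=
    fun t ht ↦ (hγ t ht).fst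
  have htime : EqOn (fun t ↦ (γ t).1) id (Ioo (a - ε) (a + ε)) :=
    isOpen_Ioo.eqOn_of_deriv_eq (x := a) isPreconnected_Ioo
      (fun t ht ↦ (hfst t ht).differentiableAt.differentiableWithinAt) differentiableOn_id
      (fun t ht ↦ by rw [(hfst t ht).deriv, deriv_id]) ⟨by linarith, by linarith⟩ (by simp [hγa])
  refine ⟨fun t ↦ (γ t).2, by simp [hγa], ?_⟩
  filter_upwards [Ioo_mem_nhds (sub_lt_self a hε) (lt_add_of_pos_right a hε)] with t ht
  have hgraph : γ t = (t, (γ t).2) := Prod.ext (htime ht) rfl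
  have := (hγ t ht).snd
  rwa [hgraph] at this

theorem contDiffAt_succ_of_eventually_hasDerivAt {φ : ℝ → F}
    (hφ : ∀ᶠ x in 𝓝 a, HasDerivAt φ (f (x, φ x)) x) {n : ℕ}
    (hf : ContDiffAt ℝ n f (a, φ a)) : ContDiffAt ℝ (n + 1) φ a := by
  have hbootstrap : ∀ m : ℕ, ContDiffAt ℝ m f (a, φ a) → ContDiffAt ℝ m φ a →
      ContDiffAt ℝ (m + 1) φ a := fun m hfm hφm ↦
    contDiffAt_succ_iff_hasFDerivAt.2 ⟨_, ⟨_, hφ, fun x hx ↦ HasDerivAt.hasFDerivAt hx⟩,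
      (ContinuousLinearMap.toSpanSingletonCLE (𝕜 := ℝ) (E := F)).contDiff.contDiffAt.comp a
        (ContDiffAt.comp a hfm (contDiffAt_id.prodMk hφm))⟩
  refine hbootstrap n hf ?_
  induction n with
  | zero =>
    exact contDiffAt_zero.2 ⟨_, hφ, fun x hx ↦ (HasDerivAt.continuousAt hx).continuousWithinAt⟩
  | succ n ih =>
    have hfn : ContDiffAt ℝ n f (a, φ a) := hf.of_le (by exact_mod_cast n.le_succ)
    exact_mod_cast hbootstrap n hfn (ih hfn)

end NonautonomousODE

/-! ### The transverse coordinate of an orbit -/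

/-- The slope `dy/dx` of the orbits of a planar vector field `X`, meaningful where the horizontal
component of `X` does not vanish. -/
noncomputable def orbitSlope (X : ℝ × ℝ → ℝ × ℝ) (p : ℝ × ℝ) : ℝ :=
  (X p).2 / (X p).1

/-- The height of `p` above the graph of `φ`, rescaled by `E`. When the graph of `φ` is an orbit
and `E` is an integrating factor of the linearisation of the orbit equation along it, this is a
first integral up to an error quadratic in the height. -/
def transverseCoord (φ E : ℝ → ℝ) (p : ℝ × ℝ) : ℝ :=
  E p.1 * (p.2 - φ p.1)

section OrbitSlope

variable {X : ℝ × ℝ → ℝ × ℝ} {p : ℝ × ℝ}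

theorem contDiffAt_orbitSlope {n : WithTop ℕ∞} (hX : ContDiffAt ℝ n X p) (hp : (X p).1 ≠ 0) :
    ContDiffAt ℝ n (orbitSlope X) p :=
  hX.snd.div hX.fst hp

theorem fderiv_orbitSlope_of_snd_eq_zero (hX : DifferentiableAt ℝ X p) (hp : (X p).1 ≠ 0)
    (hzero : (X p).2 = 0) (v : ℝ × ℝ) :
    fderiv ℝ (orbitSlope X) p v = fderiv ℝ (fun q ↦ (X q).2) p v / (X p).1 := by
  have hinv : DifferentiableAt ℝ (fun q ↦ (X q).1⁻¹) p := hX.fst.inv hp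
  have hslope : orbitSlope X = fun q ↦ (X q).2 * (X q).1⁻¹ := rfl
  rw [hslope, fderiv_fun_mul hX.snd hinv]
  simp [hzero, div_eq_inv_mul]

end OrbitSlope

theorem deriv_deriv_eq_fderiv_of_hasDerivAt {f : ℝ × ℝ → ℝ} {φ : ℝ → ℝ} {a : ℝ}
    (hφ : ∀ᶠ x in 𝓝 a, HasDerivAt φ (f (x, φ x)) x) (hf : DifferentiableAt ℝ f (a, φ a)) :
    deriv (deriv φ) a = fderiv ℝ f (a, φ a) (1, f (a, φ a)) := by
  have hderiv : deriv φ =ᶠ[𝓝 a] fun x ↦ f (x, φ x) := hφ.mono fun _ hx ↦ hx.deriv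
  rw [hderiv.deriv_eq]
  exact (hf.hasFDerivAt.comp_hasDerivAt a ((hasDerivAt_id a).prodMk hφ.self_of_nhds)).deriv

section TransverseCoord

variable {φ E : ℝ → ℝ} {p : ℝ × ℝ}

theorem contDiffAt_transverseCoord {n : WithTop ℕ∞} (hφ : ContDiffAt ℝ n φ p.1)
    (hE : ContDiffAt ℝ n E p.1) : ContDiffAt ℝ n (transverseCoord φ E) p :=
  (hE.comp p contDiffAt_fst).mul (contDiffAt_snd.sub (hφ.comp p contDiffAt_fst))

theorem fderiv_transverseCoord (hφ : DifferentiableAt ℝ φ p.1) (hE : DifferentiableAt ℝ E p.1)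
    (v : ℝ × ℝ) :
    fderiv ℝ (transverseCoord φ E) p v =
      deriv E p.1 * v.1 * (p.2 - φ p.1) + E p.1 * (v.2 - deriv φ p.1 * v.1) := by
  have hE' := hE.hasDerivAt.comp_hasFDerivAt p (hasFDerivAt_fst (𝕜 := ℝ) (p := p))
  have hφ' := hφ.hasDerivAt.comp_hasFDerivAt p (hasFDerivAt_fst (𝕜 := ℝ) (p := p))
  have hH : fderiv ℝ (transverseCoord φ E) p = _ := (hE'.mul (hasFDerivAt_snd.sub hφ')).fderiv
  rw [hH]
  simp only [Function.comp_apply, Pi.sub_apply, add_apply, smul_apply, sub_apply,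
    ContinuousLinearMap.coe_snd', ContinuousLinearMap.coe_fst', smul_eq_mul]
  ring

theorem isBigO_snd_sub_transverseCoord {a y : ℝ} (hE : ContinuousAt E a) (hEa : E a ≠ 0) :
    (fun p ↦ p.2 - φ p.1) =O[𝓝 (a, y)] transverseCoord φ E := by
  have hfst : Tendsto Prod.fst (𝓝 (a, y)) (𝓝 a) := continuous_fst.tendsto _
  have hinv : (fun p : ℝ × ℝ ↦ (E p.1)⁻¹) =O[𝓝 (a, y)] fun _ ↦ (1 : ℝ) :=
    ((hE.tendsto.inv₀ hEa).comp hfst).isBigO_one ℝ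
  refine (hinv.mul (isBigO_refl (transverseCoord φ E) _)).congr' ?_ (by simp)
  filter_upwards [hfst.eventually (hE.eventually_ne hEa)] with p hp
  rw [transverseCoord, inv_mul_cancel_left₀ hp]

theorem isBigO_fderiv_transverseCoord {X : ℝ × ℝ → ℝ × ℝ} {a : ℝ}
    (hX : ContDiffAt ℝ 2 X (a, φ a)) (hX₁ : (X (a, φ a)).1 ≠ 0)
    (hφ : ∀ᶠ x in 𝓝 a, HasDerivAt φ (orbitSlope X (x, φ x)) x)
    (hE : ∀ᶠ x in 𝓝 a, HasDerivAt E (-fderiv ℝ (orbitSlope X) (x, φ x) (0, 1) * E x) x)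
    (hEa : E a ≠ 0) :
    (fun p ↦ fderiv ℝ (transverseCoord φ E) p (X p)) =O[𝓝 (a, φ a)]
      fun p ↦ transverseCoord φ E p ^ 2 := by
  have hφa : ContinuousAt φ a := hφ.self_of_nhds.continuousAt
  have hfst : Tendsto Prod.fst (𝓝 (a, φ a)) (𝓝 a) := continuous_fst.tendsto _
  have hproj : Tendsto (fun p : ℝ × ℝ ↦ ((p.1, φ p.1), p)) (𝓝 (a, φ a))
      (𝓝 ((a, φ a), (a, φ a))) :=
    (hfst.prodMk_nhds (hφa.tendsto.comp hfst)).prodMk_nhds tendsto_id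
  have hTaylor := (isBigO_taylor_one_sub (contDiffAt_orbitSlope hX hX₁)).comp_tendsto hproj
  have hheight : (fun p : ℝ × ℝ ↦ ‖p - (p.1, φ p.1)‖) =O[𝓝 (a, φ a)] transverseCoord φ E := by
    refine (isBigO_snd_sub_transverseCoord hE.self_of_nhds.continuousAt hEa).norm_left.congr_left
      fun p ↦ ?_
    simp [Prod.norm_def]
  have hcoef : (fun p : ℝ × ℝ ↦ (X p).1 * E p.1) =O[𝓝 (a, φ a)] fun _ ↦ (1 : ℝ) :=
    (hX.continuousAt.fst.tendsto.mul (hE.self_of_nhds.continuousAt.tendsto.comp hfst)).isBigO_one ℝ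
  have hproduct := hcoef.mul (hTaylor.trans (hheight.pow 2))
  simp only [one_mul] at hproduct
  refine hproduct.congr' ?_ .rfl
  filter_upwards [hfst.eventually hφ, hfst.eventually hE,
    hX.continuousAt.fst.eventually_ne hX₁] with p hφp hEp hX₁p
  have hslope : (X p).2 = orbitSlope X p * (X p).1 := (div_mul_cancel₀ _ hX₁p).symm
  have hvertical : fderiv ℝ (orbitSlope X) (p.1, φ p.1) (p - (p.1, φ p.1)) =
      fderiv ℝ (orbitSlope X) (p.1, φ p.1) (0, 1) * (p.2 - φ p.1) := by
    have : p - (p.1, φ p.1) = (p.2 - φ p.1) • ((0 : ℝ), (1 : ℝ)) := by ext <;> simp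
    rw [this, map_smul, smul_eq_mul, mul_comm]
  rw [fderiv_transverseCoord hφp.differentiableAt hEp.differentiableAt, hφp.deriv, hEp.deriv,
    hslope]
  simp only [Function.comp_apply, hvertical]
  ring

theorem isBigO_transverseCoord_zero_right {a : ℝ} (hφ : ContDiffAt ℝ 3 φ a) (hφa : φ a = 0)
    (hφ'a : deriv φ a = 0) (hE : DifferentiableAt ℝ E a) (hEa : E a = 1) :
    (fun x ↦ transverseCoord φ E (x, 0) + deriv (deriv φ) a / 2 * (x - a) ^ 2) =O[𝓝 a]
      fun x ↦ (x - a) ^ 3 := by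
  set c := deriv (deriv φ) a
  have hφ' : ∀ᶠ x in 𝓝 a, HasDerivAt φ (deriv φ x) x := (hφ.eventually (by decide)).mono
    fun x hx ↦ (hx.differentiableAt (by norm_num)).hasDerivAt
  have hφ'C2 : ContDiffAt ℝ 2 (deriv φ) a :=
    (hφ.fderiv_right (by norm_num)).clm_apply contDiffAt_const
  have hderiv : (fun x ↦ deriv φ x - c * (x - a)) =O[𝓝 a] fun x ↦ (x - a) ^ 2 := by
    simpa [hφ'a] using isBigO_taylor_one_sub_deriv hφ'C2
  have hcube : (fun x ↦ φ x - c / 2 * (x - a) ^ 2) =O[𝓝 a] fun x ↦ (x - a) ^ 3 := by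
    refine isBigO_pow_succ_of_hasDerivAt (hφ'.mono fun x hx ↦ ?_) (by simp [hφa]) hderiv
    refine (hx.sub ((((hasDerivAt_id x).sub_const a).pow 2).const_mul (c / 2))).congr_deriv ?_
    simp only [Nat.cast_ofNat, id_eq, Nat.add_one_sub_one, pow_one, mul_one, sub_right_inj]
    ring
  have hE' : (fun x ↦ E x - 1) =O[𝓝 a] fun x ↦ x - a := by
    simpa [hEa] using hE.isBigO_sub
  have hφsq : φ =O[𝓝 a] fun x ↦ (x - a) ^ 2 :=
    isBigO_pow_succ_of_hasDerivAt (n := 1) hφ' hφa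
      (by simpa [hφ'a] using (hφ'C2.differentiableAt (by norm_num)).isBigO_sub)
  have hrest : (fun x ↦ (E x - 1) * φ x) =O[𝓝 a] fun x ↦ (x - a) ^ 3 :=
    (hE'.mul hφsq).congr_right fun x ↦ (pow_succ' _ _).symm
  refine (hcube.add hrest).neg_left.congr_left fun x ↦ ?_
  simp only [transverseCoord]
  ring

end TransverseCoord

/-- The part of the strip `a < x < b` in which the transverse coordinate is smaller than `A` in
absolute value. -/
def transverseBox (φ E : ℝ → ℝ) (a b A : ℝ) : Set (ℝ × ℝ) :=
  {p | p.1 ∈ Ioo a b ∧ |transverseCoord φ E p| < A}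

section TransverseBox

variable {φ E : ℝ → ℝ}

theorem isOpen_transverseBox {a b A : ℝ} (hφ : ContinuousOn φ (Ioo a b))
    (hE : ContinuousOn E (Ioo a b)) : IsOpen (transverseBox φ E a b A) := by
  have hfst : ContinuousOn Prod.fst (Prod.fst ⁻¹' Ioo a b : Set (ℝ × ℝ)) :=
    continuous_fst.continuousOn
  have hcoord : ContinuousOn (fun p ↦ |transverseCoord φ E p|) (Prod.fst ⁻¹' Ioo a b) :=
    ((hE.comp hfst fun _ hp ↦ hp).mul
      (continuous_snd.continuousOn.sub (hφ.comp hfst fun _ hp ↦ hp))).abs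
  exact hcoord.isOpen_inter_preimage (isOpen_Ioo.preimage continuous_fst) isOpen_Iio

theorem mk_graph_mem_transverseBox {a b A x : ℝ} (hx : x ∈ Ioo a b) (hA : 0 < A) :
    (x, φ x) ∈ transverseBox φ E a b A :=
  ⟨hx, by simpa [transverseCoord] using hA⟩

theorem eventually_forall_mem_transverseBox {a : ℝ} (hφ : ContinuousAt φ a)
    (hE : ContinuousAt E a) (hEa : E a ≠ 0) {Q : ℝ × ℝ → Prop} (hQ : ∀ᶠ p in 𝓝 (a, φ a), Q p) :
    ∀ᶠ r in 𝓝[>] (0 : ℝ), ∀ p ∈ transverseBox φ E (a - r) (a + r) r, Q p := by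
  -- `(x, h) ↦ (x, φ x + h / E x)` inverts `p ↦ (p.1, transverseCoord φ E p)`.
  have hfst : Tendsto Prod.fst (𝓝 (a, (0 : ℝ))) (𝓝 a) := continuous_fst.tendsto _
  have hinverse : Tendsto (fun q : ℝ × ℝ ↦ (q.1, φ q.1 + q.2 / E q.1)) (𝓝 (a, 0))
      (𝓝 (a, φ a + 0 / E a)) :=
    hfst.prodMk_nhds ((hφ.tendsto.comp hfst).add
      ((continuous_snd.tendsto (a, (0 : ℝ))).div (hE.tendsto.comp hfst) hEa))
  rw [zero_div, add_zero] at hinverse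
  obtain ⟨ε, hε, hball⟩ := Metric.eventually_nhds_iff_ball.1
    ((hinverse.eventually hQ).and (hfst.eventually (hE.eventually_ne hEa)))
  filter_upwards [Ioo_mem_nhdsGT hε] with r hr p hp
  have hmem : (p.1, transverseCoord φ E p) ∈ Metric.ball (a, (0 : ℝ)) ε := by
    rw [← ball_prod_same, mem_prod, Real.ball_eq_Ioo, mem_ball_zero_iff]
    exact ⟨⟨by linarith [hp.1.1, hr.2], by linarith [hp.1.2, hr.2]⟩, hp.2.trans hr.2⟩
  obtain ⟨hQp, hEp⟩ := hball _ hmem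
  simpa [transverseCoord, hEp] using hQp

end TransverseBox

/-! ### The fold orbit and its tube -/

/-- A neighbourhood of the fold orbit of `X` through `(α, 0)`, with every estimate needed to follow
the nearby orbits: `φ` parametrises the fold orbit, `E` is its integrating factor, `r` is the size
of the neighbourhood, `m` bounds the horizontal speed from below, `K` controls the drift of the
transverse coordinate, and `k` is the quadratic coefficient of the transverse coordinate on the
axis `y = 0`. -/
structure FoldTube (X : ℝ × ℝ → ℝ × ℝ) (U : Set (ℝ × ℝ)) (α : ℝ) where
  (φ E : ℝ → ℝ)
  (r m K k : ℝ)
  r_pos : 0 < r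
  m_pos : 0 < m
  K_nonneg : 0 ≤ K
  k_pos : 0 < k
  φ_fold : φ α = 0
  contDiffAt_φ : ∀ x ∈ Ioo (α - r) (α + r), ContDiffAt ℝ 2 φ x
  contDiffAt_E : ∀ x ∈ Ioo (α - r) (α + r), ContDiffAt ℝ 2 E x
  half_le_E : ∀ x ∈ Ioo (α - r) (α + r), 1 / 2 ≤ E x
  deriv_φ_neg : ∀ x ∈ Ioo α (α + r), deriv φ x < 0
  box_subset : transverseBox φ E (α - r) (α + r) r ⊆ U
  speed : ∀ p ∈ transverseBox φ E (α - r) (α + r) r, m ≤ (X p).1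
  drift : ∀ p ∈ transverseBox φ E (α - r) (α + r) r,
    |fderiv ℝ (transverseCoord φ E) p (X p)| ≤ K * transverseCoord φ E p ^ 2
  expansion : (fun x ↦ transverseCoord φ E (x, 0) - k * (x - α) ^ 2) =O[𝓝 α] fun x ↦ (x - α) ^ 3

theorem exists_orbit_and_integratingFactor {X : ℝ × ℝ → ℝ × ℝ} {a y : ℝ}
    (hX : ContDiffAt ℝ 2 X (a, y)) (hX₁ : (X (a, y)).1 ≠ 0) :
    ∃ φ E : ℝ → ℝ, φ a = y ∧ E a = 1 ∧ ContDiffAt ℝ 3 φ a ∧ ContDiffAt ℝ 2 E a ∧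
      (∀ᶠ x in 𝓝 a, HasDerivAt φ (orbitSlope X (x, φ x)) x) ∧
      ∀ᶠ x in 𝓝 a, HasDerivAt E (-fderiv ℝ (orbitSlope X) (x, φ x) (0, 1) * E x) x := by
  have hslope : ContDiffAt ℝ 2 (orbitSlope X) (a, y) := contDiffAt_orbitSlope hX hX₁
  obtain ⟨φ, rfl, hφ⟩ := exists_eventually_hasDerivAt_of_contDiffAt (hslope.of_le (by norm_num))
  have hφC3 : ContDiffAt ℝ 3 φ a := by
    exact_mod_cast contDiffAt_succ_of_eventually_hasDerivAt (n := 2) hφ hslope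
  have hlinear : ∀ e : ℝ, ContDiffAt ℝ 1
      (fun q : ℝ × ℝ ↦ -fderiv ℝ (orbitSlope X) (q.1, φ q.1) (0, 1) * q.2) (a, e) := fun e ↦ by
    have hgraph : ContDiffAt ℝ 1 (fun q : ℝ × ℝ ↦ (q.1, φ q.1)) (a, e) :=
      contDiffAt_fst.prodMk ((hφC3.of_le (by norm_num)).comp (a, e) contDiffAt_fst)
    have hpartial : ContDiffAt ℝ 1 (fun p ↦ fderiv ℝ (orbitSlope X) p (0, 1)) (a, φ a) :=
      (hslope.fderiv_right (by norm_num)).clm_apply contDiffAt_const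
    exact (hpartial.comp (a, e) hgraph).neg.mul contDiffAt_snd
  obtain ⟨E, hEa, hE⟩ := exists_eventually_hasDerivAt_of_contDiffAt (hlinear 1)
  have hEC2 : ContDiffAt ℝ 2 E a := by
    exact_mod_cast contDiffAt_succ_of_eventually_hasDerivAt (n := 1) hE (hlinear _)
  exact ⟨φ, E, rfl, hEa, hφC3, hEC2, hφ, hE⟩

theorem deriv_eq_zero_and_deriv_deriv_neg_of_fold {X : ℝ × ℝ → ℝ × ℝ} {φ : ℝ → ℝ} {a y : ℝ}
    (hX : ContDiffAt ℝ 1 X (a, y)) (hfold : (X (a, y)).2 = 0) (hX₁ : 0 < (X (a, y)).1)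
    (hX₂ : fderiv ℝ (fun p ↦ (X p).2) (a, y) (1, 0) < 0) (hφa : φ a = y)
    (hφ : ∀ᶠ x in 𝓝 a, HasDerivAt φ (orbitSlope X (x, φ x)) x) :
    deriv φ a = 0 ∧ deriv (deriv φ) a < 0 := by
  subst hφa
  have hslope : orbitSlope X (a, φ a) = 0 := by rw [orbitSlope, hfold, zero_div]
  have hdiff : DifferentiableAt ℝ (orbitSlope X) (a, φ a) :=
    (contDiffAt_orbitSlope hX hX₁.ne').differentiableAt one_ne_zero
  refine ⟨by rw [hφ.self_of_nhds.deriv, hslope], ?_⟩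
  rw [deriv_deriv_eq_fderiv_of_hasDerivAt hφ hdiff, hslope,
    fderiv_orbitSlope_of_snd_eq_zero (hX.differentiableAt one_ne_zero) hX₁.ne' hfold]
  exact div_neg_of_neg_of_pos hX₂ hX₁

theorem nonempty_foldTube {X : ℝ × ℝ → ℝ × ℝ} {U : Set (ℝ × ℝ)} {α : ℝ}
    (hU : U ∈ 𝓝 (α, (0 : ℝ))) (hX : ContDiffAt ℝ 2 X (α, 0)) (hfold : (X (α, 0)).2 = 0)
    (hX₁ : 0 < (X (α, 0)).1) (hX₂ : fderiv ℝ (fun p ↦ (X p).2) (α, 0) (1, 0) < 0) :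
    Nonempty (FoldTube X U α) := by
  obtain ⟨φ, E, hφα, hEα, hφC3, hEC2, hφ, hE⟩ := exists_orbit_and_integratingFactor hX hX₁.ne'
  obtain ⟨hφ'α, hφ''α⟩ := deriv_eq_zero_and_deriv_deriv_neg_of_fold
    (hX.of_le (by norm_num)) hfold hX₁ hX₂ hφα hφ
  have hhalf : ∀ᶠ x in 𝓝 α, 1 / 2 ≤ E x :=
    hEC2.continuousAt.eventually_const_le (by rw [hEα]; norm_num)
  have hdecr : ∀ᶠ x in 𝓝 α, α < x → deriv φ x < 0 := by
    filter_upwards [eventually_nhdsWithin_sign_eq_of_deriv_neg hφ''α hφ'α] with x hx hαx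
    rwa [sign_neg (sub_neg.2 hαx), sign_eq_neg_one_iff] at hx
  obtain ⟨K, hK, hdrift⟩ := (isBigO_fderiv_transverseCoord (hφα ▸ hX) (hφα ▸ hX₁.ne') hφ hE
    (hEα ▸ one_ne_zero)).exists_nonneg
  have hfst : Tendsto Prod.fst (𝓝 (α, φ α)) (𝓝 α) := continuous_fst.tendsto _
  have hstrip := hfst.eventually <| (hφC3.eventually (by decide)).and <|
    (hEC2.eventually (by decide)).and <| hhalf.and hdecr
  have hlocal : ∀ᶠ p in 𝓝 (α, φ α), p ∈ U ∧ (X (α, 0)).1 / 2 ≤ (X p).1 :=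
    hφα ▸ (eventually_mem_set.2 hU).and
      (hX.continuousAt.fst.eventually_const_le (half_lt_self hX₁))
  obtain ⟨r, hbox, (hr : 0 < r)⟩ := ((eventually_forall_mem_transverseBox hφC3.continuousAt
    hEC2.continuousAt (hEα ▸ one_ne_zero) (hstrip.and (hlocal.and hdrift.bound))).and
    self_mem_nhdsWithin).exists
  have hgraph := fun x hx ↦ (hbox (x, φ x) (mk_graph_mem_transverseBox hx hr)).1
  exact ⟨{
    φ, E, r, K
    m := (X (α, 0)).1 / 2
    k := -deriv (deriv φ) α / 2
    r_pos := hr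
    m_pos := half_pos hX₁
    K_nonneg := hK
    k_pos := half_pos (neg_pos.2 hφ''α)
    φ_fold := hφα
    contDiffAt_φ := fun x hx ↦ (hgraph x hx).1.of_le (by norm_num)
    contDiffAt_E := fun x hx ↦ (hgraph x hx).2.1
    half_le_E := fun x hx ↦ (hgraph x hx).2.2.1
    deriv_φ_neg := fun x hx ↦ (hgraph x ⟨by linarith [hx.1, hr], hx.2⟩).2.2.2 hx.1
    box_subset := fun p hp ↦ (hbox p hp).2.1.1
    speed := fun p hp ↦ (hbox p hp).2.1.2
    drift := fun p hp ↦ by simpa using (hbox p hp).2.2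
    expansion := by
      refine (isBigO_transverseCoord_zero_right hφC3 hφα hφ'α
        (hEC2.differentiableAt (by norm_num)) hEα).congr_left fun x ↦ ?_
      ring }⟩

/-! ### Trajectories and first passages -/

theorem hasDerivWithinAt_Ici_of_isIntegralCurveOn {E : Type*} [NormedAddCommGroup E]
    [NormedSpace ℝ E] {v : ℝ → E → E} {γ : ℝ → E} {a b t : ℝ}
    (hγ : IsIntegralCurveOn γ v (Icc a b)) (ht : t ∈ Ico a b) :
    HasDerivWithinAt γ (v t (γ t)) (Ici t) t :=
  (hγ t (Ico_subset_Icc_self ht)).mono_of_mem_nhdsWithin (Icc_mem_nhdsGE_of_mem ht)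

theorem fst_add_mul_le_of_isIntegralCurveOn {X : ℝ × ℝ → ℝ × ℝ} {β : ℝ → ℝ × ℝ} {m S t : ℝ}
    (hβ : IsIntegralCurveOn β (fun _ ↦ X) (Icc 0 S)) (hm : ∀ t ∈ Ico 0 S, m ≤ (X (β t)).1)
    (ht : t ∈ Icc 0 S) :
    (β 0).1 + m * t ≤ (β t).1 := by
  have hline : ∀ s : ℝ, HasDerivAt (fun s ↦ (β 0).1 + m * s) m s := fun s ↦ by
    simpa using ((hasDerivAt_id s).const_mul m).const_add (β 0).1
  exact image_le_of_deriv_right_le_deriv_boundary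
    (fun s _ ↦ (hline s).continuousAt.continuousWithinAt)
    (fun s _ ↦ (hline s).hasDerivWithinAt) (by simp) hβ.continuousOn.fst
    (fun s hs ↦ (hasDerivWithinAt_Ici_of_isIntegralCurveOn hβ hs).fst) hm ht

/-- `β` is a trajectory of `X` inside `U` that starts at `q₀`, above the line of height `y₁`, and
meets this line for the first time at time `S`. -/
structure IsFirstPassage (X : ℝ × ℝ → ℝ × ℝ) (U : Set (ℝ × ℝ)) (q₀ : ℝ × ℝ) (y₁ S : ℝ)
    (β : ℝ → ℝ × ℝ) : Prop where
  pos : 0 < S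
  start : β 0 = q₀
  mem : ∀ t ∈ Icc 0 S, β t ∈ U
  integralCurve : IsIntegralCurveOn β (fun _ ↦ X) (Icc 0 S)
  arrival : (β S).2 = y₁
  above : ∀ t ∈ Ico 0 S, y₁ < (β t).2

namespace FoldTube

variable {X : ℝ × ℝ → ℝ × ℝ} {U : Set (ℝ × ℝ)} {α : ℝ} (c : FoldTube X U α)

/-- The transverse coordinate of the tube. -/
def coord : ℝ × ℝ → ℝ :=
  transverseCoord c.φ c.E

/-- The interval of abscissae over which the tube lies. -/
def base : Set ℝ :=
  Ioo (α - c.r) (α + c.r)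

variable {c} in
theorem mem_base_of_mem_Ico {x : ℝ} (hx : x ∈ Ico α (α + c.r)) : x ∈ c.base :=
  ⟨by linarith [hx.1, c.r_pos], hx.2⟩

variable {c} in
theorem E_pos {x : ℝ} (hx : x ∈ c.base) : 0 < c.E x :=
  (half_pos one_pos).trans_le (c.half_le_E x hx)

variable {c} in
theorem contDiffAt_coord {p : ℝ × ℝ} (hp : p.1 ∈ c.base) : ContDiffAt ℝ 2 c.coord p :=
  contDiffAt_transverseCoord (c.contDiffAt_φ _ hp) (c.contDiffAt_E _ hp)

theorem strictAntiOn_φ : StrictAntiOn c.φ (Ico α (α + c.r)) := by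
  refine strictAntiOn_of_deriv_neg (convex_Ico _ _) (fun x hx ↦ ?_) fun x hx ↦ ?_
  · exact (c.contDiffAt_φ x (mem_base_of_mem_Ico hx)).continuousAt.continuousWithinAt
  · rw [interior_Ico] at hx
    exact c.deriv_φ_neg x hx

theorem coord_variation {β : ℝ → ℝ × ℝ} {S A : ℝ}
    (hβ : IsIntegralCurveOn β (fun _ ↦ X) (Icc 0 S)) (hx : ∀ t ∈ Icc 0 S, (β t).1 ∈ c.base)
    (hA : ∀ t ∈ Ico 0 S, |c.coord (β t)| < A) (hAr : A ≤ c.r) (hS : c.K * A * S ≤ 1) :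
    ∀ t ∈ Icc 0 S, |c.coord (β t)| ≤ 3 * |c.coord (β 0)| ∧
      |c.coord (β t) - c.coord (β 0)| ≤ 9 * c.K * c.coord (β 0) ^ 2 * t := by
  refine abs_sub_le_of_abs_deriv_le_mul_sq
    (h' := fun t ↦ fderiv ℝ c.coord (β t) (X (β t))) (fun t ht ↦ ?_) (fun t ht ↦ ?_) c.K_nonneg
    (fun t ht ↦ c.drift _ ⟨hx t (Ico_subset_Icc_self ht), (hA t ht).trans_le hAr⟩)
    (fun t ht ↦ (hA t ht).le) hS
  · exact (contDiffAt_coord (hx t ht)).continuousAt.comp_continuousWithinAt (hβ.continuousOn t ht)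
  · have hdiff := (contDiffAt_coord (hx t (Ico_subset_Icc_self ht))).differentiableAt
      (by norm_num)
    exact hdiff.hasFDerivAt.comp_hasDerivWithinAt t
      (hasDerivWithinAt_Ici_of_isIntegralCurveOn hβ ht)

/-- A section `y = φ p` of the tube together with a barrier `x = b` that cannot be reached by an
orbit whose transverse coordinate stays below `A` unless it has crossed the section before. -/
structure Gate (p b A : ℝ) : Prop where
  lt_p : α < p
  p_lt : p < b
  b_lt : b < α + c.r
  A_pos : 0 < A
  A_le_r : A ≤ c.r
  A_le_coord : A ≤ c.coord (b, c.φ p)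
  drift_le : c.K * A * (c.r / c.m) ≤ 1

variable {c} {p b A : ℝ}

theorem eventually_gate (hp : α < p) (hpb : p < b) (hb : b < α + c.r) :
    ∀ᶠ A in 𝓝[>] 0, c.Gate p b A := by
  have hcoord : 0 < c.coord (b, c.φ p) := by
    have hbIco : b ∈ Ico α (α + c.r) := ⟨(hp.trans hpb).le, hb⟩
    exact mul_pos (E_pos (mem_base_of_mem_Ico hbIco))
      (sub_pos.2 (c.strictAntiOn_φ ⟨hp.le, hpb.trans hb⟩ hbIco hpb))
  have hdrift : ∀ᶠ A in 𝓝[>] 0, c.K * A * (c.r / c.m) ≤ 1 := by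
    have : ContinuousAt (fun A ↦ c.K * A * (c.r / c.m)) 0 := by fun_prop
    exact nhdsWithin_le_nhds (this.eventually_le_const (by simp))
  filter_upwards [Ioc_mem_nhdsGT c.r_pos, Ioc_mem_nhdsGT hcoord, hdrift] with A hAr hAc hAd
  exact ⟨hp, hpb, hb, hAr.1, hAr.2, hAc.2, hAd⟩

namespace Gate

variable {β : ℝ → ℝ × ℝ} {S x₀ : ℝ}

theorem fst_lt_of_le_snd (hg : c.Gate p b A) {q : ℝ × ℝ} (hq : q.1 ≤ b)
    (hqA : |c.coord q| < A) (hsection : c.φ p ≤ q.2) : q.1 < b := by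
  refine hq.lt_of_ne fun hqb ↦ ?_
  have hE : 0 ≤ c.E b :=
    (E_pos (mem_base_of_mem_Ico ⟨(hg.lt_p.trans hg.p_lt).le, hg.b_lt⟩)).le
  have hle : c.coord (b, c.φ p) ≤ c.coord q := by
    simp only [coord, transverseCoord, hqb]
    gcongr
  exact (hg.A_le_coord.trans hle).not_gt ((le_abs_self _).trans_lt hqA)

theorem box_subset (hg : c.Gate p b A) :
    transverseBox c.φ c.E (α - c.r) b A ⊆ transverseBox c.φ c.E (α - c.r) (α + c.r) c.r :=
  fun _ hq ↦ ⟨⟨hq.1.1, hq.1.2.trans hg.b_lt⟩, hq.2.trans_le hg.A_le_r⟩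

theorem mul_le_and_coord_variation (hg : c.Gate p b A)
    (hβ : IsIntegralCurveOn β (fun _ ↦ X) (Icc 0 S)) (hS : 0 ≤ S) (hx₀ : α ≤ (β 0).1)
    (hbox : ∀ t ∈ Ico 0 S, β t ∈ transverseBox c.φ c.E (α - c.r) b A) (hend : (β S).1 ≤ b) :
    α + c.m * S ≤ (β S).1 ∧ |c.coord (β S)| ≤ 3 * |c.coord (β 0)| ∧
      |c.coord (β S) - c.coord (β 0)| ≤ 9 * c.K * (c.r / c.m) * c.coord (β 0) ^ 2 := by
  have hspeed : ∀ t ∈ Icc 0 S, (β 0).1 + c.m * t ≤ (β t).1 := fun t ht ↦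
    fst_add_mul_le_of_isIntegralCurveOn hβ (fun s hs ↦ c.speed _ (hg.box_subset (hbox s hs))) ht
  have hbase : ∀ t ∈ Icc 0 S, (β t).1 ∈ c.base := fun t ht ↦ by
    refine mem_base_of_mem_Ico ⟨?_, ?_⟩
    · linarith [hspeed t ht, mul_nonneg c.m_pos.le ht.1]
    · rcases ht.2.eq_or_lt with rfl | htS
      · exact hend.trans_lt hg.b_lt
      · exact (hbox t ⟨ht.1, htS⟩).1.2.trans hg.b_lt
  have hSend := right_mem_Icc.2 hS
  have htime : S ≤ c.r / c.m := by
    rw [le_div_iff₀' c.m_pos]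
    linarith [hspeed S hSend, hg.b_lt]
  have hKA : c.K * A * S ≤ 1 :=
    (mul_le_mul_of_nonneg_left htime (mul_nonneg c.K_nonneg hg.A_pos.le)).trans hg.drift_le
  obtain ⟨hgrowth, hchange⟩ :=
    c.coord_variation hβ hbase (fun t ht ↦ (hbox t ht).2) hg.A_le_r hKA S hSend
  refine ⟨by linarith [hspeed S hSend], hgrowth, hchange.trans ?_⟩
  have := mul_le_mul_of_nonneg_left htime
    (mul_nonneg (mul_nonneg (by norm_num : (0 : ℝ) ≤ 9) c.K_nonneg) (sq_nonneg (c.coord (β 0))))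
  linarith

theorem mem_transverseBox (hg : c.Gate p b A)
    (hβ : IsIntegralCurveOn β (fun _ ↦ X) (Icc 0 S)) (hstart : β 0 = (x₀, 0))
    (hx₀ : x₀ ∈ Ico α b) (hA : 3 * |c.coord (x₀, 0)| < A)
    (hsection : ∀ t ∈ Icc 0 S, c.φ p ≤ (β t).2) :
    ∀ t ∈ Icc 0 S, β t ∈ transverseBox c.φ c.E (α - c.r) b A := by
  have hbase : ∀ x ∈ Ioo (α - c.r) b, x ∈ c.base := fun x hx ↦ ⟨hx.1, hx.2.trans hg.b_lt⟩
  have hopen : IsOpen (transverseBox c.φ c.E (α - c.r) b A) := isOpen_transverseBox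
    (fun x hx ↦ (c.contDiffAt_φ x (hbase x hx)).continuousAt.continuousWithinAt)
    (fun x hx ↦ (c.contDiffAt_E x (hbase x hx)).continuousAt.continuousWithinAt)
  refine forall_mem_of_continuousOn_of_isOpen hopen hβ.continuousOn fun t ht hbox ↦ ?_
  have hβt := hβ.mono (Icc_subset_Icc_right ht.2)
  have hle : (β t).1 ≤ b := by
    rcases ht.1.eq_or_lt with rfl | ht₀
    · simpa [hstart] using hx₀.2.le
    · have hclosure : t ∈ closure (Ico 0 t) := by
        rw [closure_Ico ht₀.ne]
        exact right_mem_Icc.2 ht₀.le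
      have hcont := (hβt.continuousOn.fst t (right_mem_Icc.2 ht.1)).mono Ico_subset_Icc_self
      simpa using hcont.mem_closure (t := Iic b) hclosure fun s hs ↦ (hbox s hs).1.2.le
  obtain ⟨hlower, hgrowth, -⟩ :=
    hg.mul_le_and_coord_variation hβt ht.1 (by simpa [hstart] using hx₀.1) hbox hle
  have hsmall : |c.coord (β t)| < A := hgrowth.trans_lt (by rwa [hstart])
  refine ⟨⟨?_, hg.fst_lt_of_le_snd hle hsmall (hsection t ht)⟩, hsmall⟩
  linarith [c.r_pos, mul_nonneg c.m_pos.le ht.1]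

theorem φ_neg (hg : c.Gate p b A) : c.φ p < 0 := by
  rw [← c.φ_fold]
  exact c.strictAntiOn_φ ⟨le_rfl, by linarith [c.r_pos]⟩
    ⟨hg.lt_p.le, hg.p_lt.trans hg.b_lt⟩ hg.lt_p

theorem exists_isFirstPassage (hg : c.Gate p b A)
    (hβ : IsIntegralCurveOn β (fun _ ↦ X) (Icc 0 S)) (hstart : β 0 = (x₀, 0))
    (hx₀ : x₀ ∈ Ico α b) (hA : 3 * |c.coord (x₀, 0)| < A) (hS : 0 ≤ S) (hbS : b ≤ α + c.m * S) :
    ∃ T, IsFirstPassage X U (x₀, 0) (c.φ p) T β := by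
  obtain ⟨t, ht, htp⟩ : ∃ t ∈ Icc 0 S, (β t).2 ≤ c.φ p := by
    by_contra! habove
    have hbox := hg.mem_transverseBox hβ hstart hx₀ hA fun t ht ↦ (habove t ht).le
    have hSbox := hbox S (right_mem_Icc.2 hS)
    have := (hg.mul_le_and_coord_variation hβ hS (by simpa [hstart] using hx₀.1)
      (fun t ht ↦ hbox t (Ico_subset_Icc_self ht)) hSbox.1.2.le).1
    exact hSbox.1.2.not_ge (hbS.trans this)
  obtain ⟨T, hT, hTp, hbefore⟩ := exists_first_time_eq ht.1
    (hβ.continuousOn.snd.mono (Icc_subset_Icc_right ht.2)) (by simpa [hstart] using hg.φ_neg) htp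
  have hβT := hβ.mono (Icc_subset_Icc_right (hT.2.trans ht.2))
  have habove : ∀ s ∈ Icc 0 T, c.φ p ≤ (β s).2 := fun s hs ↦
    hs.2.eq_or_lt.elim (fun h ↦ h ▸ hTp.ge) fun h ↦ (hbefore s ⟨hs.1, h⟩).le
  exact ⟨T, hT.1, hstart, fun s hs ↦ c.box_subset (hg.box_subset
    (hg.mem_transverseBox hβT hstart hx₀ hA habove s hs)), hβT, hTp, hbefore⟩

theorem coord_arrival (hg : c.Gate p b A) (hβ : IsFirstPassage X U (x₀, 0) (c.φ p) S β)
    (hx₀ : x₀ ∈ Ico α b) (hA : 3 * |c.coord (x₀, 0)| < A) :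
    (β S).1 ∈ Ico α b ∧ |c.coord ((β S).1, c.φ p)| ≤ 3 * |c.coord (x₀, 0)| ∧
      |c.coord ((β S).1, c.φ p) - c.coord (x₀, 0)| ≤
        9 * c.K * (c.r / c.m) * c.coord (x₀, 0) ^ 2 := by
  have habove : ∀ t ∈ Icc 0 S, c.φ p ≤ (β t).2 := fun t ht ↦
    ht.2.eq_or_lt.elim (fun h ↦ h ▸ hβ.arrival.ge) fun h ↦ (hβ.above t ⟨ht.1, h⟩).le
  have hbox := hg.mem_transverseBox hβ.integralCurve hβ.start hx₀ hA habove
  have hlast := (hbox S (right_mem_Icc.2 hβ.pos.le)).1.2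
  obtain ⟨hlower, hestimates⟩ := hg.mul_le_and_coord_variation hβ.integralCurve hβ.pos.le
    (by simpa [hβ.start] using hx₀.1) (fun t ht ↦ hbox t (Ico_subset_Icc_self ht)) hlast.le
  have hend : β S = ((β S).1, c.φ p) := Prod.ext rfl hβ.arrival
  rw [← hend, ← hβ.start]
  exact ⟨⟨by linarith [mul_nonneg c.m_pos.le hβ.pos.le], hlast⟩, hestimates⟩

end Gate

/-! ### Expansion of the transition map -/

theorem deriv_coord_section_pos (hp : p ∈ Ioo α (α + c.r)) :
    0 < deriv (fun q ↦ c.coord (q, c.φ p)) p := by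
  have hbase : p ∈ c.base := mem_base_of_mem_Ico (Ioo_subset_Ico_self hp)
  have hE := ((c.contDiffAt_E p hbase).differentiableAt (by norm_num)).hasDerivAt
  have hφ := ((c.contDiffAt_φ p hbase).differentiableAt (by norm_num)).hasDerivAt
  have hsection : HasDerivAt (fun q ↦ c.coord (q, c.φ p)) (-(c.E p * deriv c.φ p)) p := by
    simpa [coord, transverseCoord] using hE.fun_mul (hφ.const_sub (c.φ p))
  rw [hsection.deriv, ← mul_neg]
  exact mul_pos (E_pos hbase) (neg_pos.2 (c.deriv_φ_neg p hp))

theorem abs_φ_sub_le {q : ℝ} (hq : q ∈ c.base) :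
    |c.φ q - c.φ p| ≤ 2 * |c.coord (q, c.φ p)| := by
  have hE := mul_le_mul_of_nonneg_right (c.half_le_E q hq) (abs_nonneg (c.φ p - c.φ q))
  rw [coord, transverseCoord, abs_mul, abs_of_pos (E_pos hq), abs_sub_comm]
  linarith

theorem exists_abs_sub_sub_div_le (hp : p ∈ Ioo α (α + c.r)) :
    ∃ ε > 0, ∃ C ≥ 0, ∀ q ∈ Ico α (α + c.r), |c.coord (q, c.φ p)| < ε →
      |q - p - c.coord (q, c.φ p) / deriv (fun q ↦ c.coord (q, c.φ p)) p| ≤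
        C * c.coord (q, c.φ p) ^ 2 := by
  have hsection : ContDiffAt ℝ 2 (fun q ↦ c.coord (q, c.φ p)) p :=
    (contDiffAt_coord (p := (p, c.φ p)) (mem_base_of_mem_Ico (Ioo_subset_Ico_self hp))).comp p
      (contDiffAt_id.prodMk contDiffAt_const)
  obtain ⟨C, hC, hbound⟩ := (isBigO_sub_sub_div_deriv hsection
    (by simp [coord, transverseCoord]) (deriv_coord_section_pos hp).ne').exists_nonneg
  obtain ⟨ε, hε, hnear⟩ := exists_pos_forall_abs_sub_lt_of_strictAntiOn c.strictAntiOn_φ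
    (Ico_mem_nhds hp.1 hp.2) hbound.bound
  refine ⟨ε / 2, half_pos hε, C, hC, fun q hq hqε ↦ ?_⟩
  have := hnear q hq ((abs_φ_sub_le (mem_base_of_mem_Ico hq)).trans_lt (by linarith))
  simpa using this

theorem isBigO_coord_axis_sq :
    (fun x ↦ c.coord (x, 0) ^ 2) =O[𝓝 α] fun x ↦ (x - α) ^ 3 := by
  have hlin : (fun x ↦ x - α) =O[𝓝 α] fun _ ↦ (1 : ℝ) :=
    (tendsto_sub_nhds_zero_iff.2 tendsto_id).isBigO_one ℝ
  have hcube : (fun x ↦ (x - α) ^ 3) =O[𝓝 α] fun x ↦ (x - α) ^ 2 :=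
    ((isBigO_refl (fun x ↦ (x - α) ^ 2) _).mul hlin).congr (fun x ↦ (pow_succ _ _).symm)
      fun x ↦ mul_one _
  have hcoord : (fun x ↦ c.coord (x, 0)) =O[𝓝 α] fun x ↦ (x - α) ^ 2 :=
    ((c.expansion.trans hcube).add ((isBigO_refl _ _).const_mul_left c.k)).congr_left
      fun x ↦ sub_add_cancel _ _
  have hquartic : (fun x ↦ ((x - α) ^ 2) ^ 2) =O[𝓝 α] fun x ↦ (x - α) ^ 3 :=
    ((isBigO_refl (fun x ↦ (x - α) ^ 3) _).mul hlin).congr (fun x ↦ by ring)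
      fun x ↦ mul_one _
  exact (hcoord.pow 2).trans hquartic

theorem tendsto_coord_axis (c : FoldTube X U α) :
    Tendsto (fun x ↦ 3 * |c.coord (x, 0)|) (𝓝 α) (𝓝 0) := by
  have hα : c.coord (α, 0) = 0 := by simp [coord, transverseCoord, c.φ_fold]
  have hcoord : ContinuousAt c.coord (α, 0) :=
    (contDiffAt_coord (mem_base_of_mem_Ico ⟨le_rfl, by linarith [c.r_pos]⟩)).continuousAt
  have haxis : Tendsto (fun x ↦ c.coord (x, 0)) (𝓝 α) (𝓝 (c.coord (α, 0))) :=
    hcoord.tendsto.comp (Continuous.prodMk_left (0 : ℝ)).continuousAt.tendsto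
  simpa [hα] using haxis.abs.const_mul 3

theorem Gate.exists_eventually_abs_arrival_sub_le (hg : c.Gate p b A) :
    ∃ C, ∀ᶠ x in 𝓝[≥] α, ∀ S β, IsFirstPassage X U (x, 0) (c.φ p) S β →
      |(β S).1 - p - c.coord (x, 0) / deriv (fun q ↦ c.coord (q, c.φ p)) p| ≤
        C * c.coord (x, 0) ^ 2 := by
  have hp : p ∈ Ioo α (α + c.r) := ⟨hg.lt_p, hg.p_lt.trans hg.b_lt⟩
  obtain ⟨ε, hε, C, hC, hlanding⟩ := exists_abs_sub_sub_div_le hp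
  set g := deriv (fun q ↦ c.coord (q, c.φ p)) p
  have hgpos : 0 < g := deriv_coord_section_pos hp
  refine ⟨9 * C + 9 * c.K * (c.r / c.m) / g, ?_⟩
  have hsmall := nhdsWithin_le_nhds (s := Ici α)
    (c.tendsto_coord_axis.eventually_lt_const (lt_min hg.A_pos hε))
  filter_upwards [Ico_mem_nhdsGE (hg.lt_p.trans hg.p_lt), hsmall] with x hx hxsmall S β hβ
  obtain ⟨hA, hε⟩ := lt_min_iff.1 hxsmall
  obtain ⟨hq, hgrowth, hchange⟩ := hg.coord_arrival hβ hx hA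
  have harrival := hlanding _ ⟨hq.1, hq.2.trans hg.b_lt⟩ (hgrowth.trans_lt hε)
  set h₁ := c.coord ((β S).1, c.φ p)
  set h₀ := c.coord (x, 0)
  have hsq : h₁ ^ 2 ≤ 9 * h₀ ^ 2 := by
    rw [← sq_abs h₁, ← sq_abs h₀]
    nlinarith [abs_nonneg h₁]
  calc |(β S).1 - p - h₀ / g|
      = |((β S).1 - p - h₁ / g) + (h₁ - h₀) / g| := by ring_nf
    _ ≤ |(β S).1 - p - h₁ / g| + |h₁ - h₀| / g := by
        grw [abs_add_le, abs_div, abs_of_pos hgpos]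
    _ ≤ C * (9 * h₀ ^ 2) + 9 * c.K * (c.r / c.m) * h₀ ^ 2 / g := by
        gcongr
        exact harrival.trans (by gcongr)
    _ = (9 * C + 9 * c.K * (c.r / c.m) / g) * h₀ ^ 2 := by ring

theorem exists_gate_eventually_exists_isFirstPassage (c : FoldTube X U α)
    (hX : ContDiffAt ℝ 1 X (α, 0)) :
    ∃ p b A, c.Gate p b A ∧
      ∀ᶠ x in 𝓝[≥] α, ∃ S β, IsFirstPassage X U (x, 0) (c.φ p) S β := by
  obtain ⟨ρ, hρ, ε, hε, hflow⟩ :=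
    hX.exists_forall_mem_closedBall_exists_eq_forall_mem_Ioo_hasDerivAt 0
  obtain ⟨b, hαb, hb⟩ : ∃ b, α < b ∧ b < min (α + c.r) (α + c.m * (ε / 2)) :=
    exists_between (lt_min (by linarith [c.r_pos]) (by linarith [mul_pos c.m_pos (half_pos hε)]))
  obtain ⟨hbr, hbε⟩ := lt_min_iff.1 hb
  obtain ⟨p, hαp, hpb⟩ := exists_between hαb
  obtain ⟨A, hg⟩ := (eventually_gate hαp hpb hbr).exists
  refine ⟨p, b, A, hg, ?_⟩
  have hsmall := nhdsWithin_le_nhds (s := Ici α)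
    (c.tendsto_coord_axis.eventually_lt_const hg.A_pos)
  have hball : ∀ᶠ x in 𝓝[≥] α, (x, (0 : ℝ)) ∈ Metric.closedBall (α, 0) ρ :=
    nhdsWithin_le_nhds ((Continuous.prodMk_left (0 : ℝ)).continuousAt.eventually_mem
      (Metric.closedBall_mem_nhds _ hρ))
  filter_upwards [Ico_mem_nhdsGE hαb, hsmall, hball] with x hx hxsmall hxball
  obtain ⟨β, hstart, hβ⟩ := hflow (x, 0) hxball
  have hcurve : IsIntegralCurveOn β (fun _ ↦ X) (Icc 0 (ε / 2)) := fun t ht ↦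
    (hβ t ⟨by linarith [ht.1], by linarith [ht.2]⟩).hasDerivWithinAt
  obtain ⟨S, hS⟩ :=
    hg.exists_isFirstPassage hcurve hstart hx hxsmall (half_pos hε).le hbε.le
  exact ⟨S, β, hS⟩

theorem exists_transition (c : FoldTube X U α) (hX : ContDiffAt ℝ 1 X (α, 0)) :
    ∃ ξ > 0, ∃ p, ∃ k > 0, ∃ C > 0, ∀ᶠ x in 𝓝[≥] α,
      (∃ S β, IsFirstPassage X U (x, 0) (-ξ) S β) ∧
      ∀ S β, IsFirstPassage X U (x, 0) (-ξ) S β →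
        |(β S).1 - p - k * (x - α) ^ 2| ≤ C * (x - α) ^ 3 := by
  obtain ⟨p, b, A, hg, hexists⟩ := c.exists_gate_eventually_exists_isFirstPassage hX
  obtain ⟨D, harrival⟩ := hg.exists_eventually_abs_arrival_sub_le
  set g := deriv (fun q ↦ c.coord (q, c.φ p)) p
  have hgpos : 0 < g := deriv_coord_section_pos ⟨hg.lt_p, hg.p_lt.trans hg.b_lt⟩
  obtain ⟨C, hC, herror⟩ := ((isBigO_coord_axis_sq.const_mul_left D).add
    (c.expansion.abs_left.const_mul_left g⁻¹)).exists_pos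
  refine ⟨-c.φ p, neg_pos.2 hg.φ_neg, p, c.k / g, div_pos c.k_pos hgpos, C, hC, ?_⟩
  rw [neg_neg]
  filter_upwards [hexists, harrival, nhdsWithin_le_nhds herror.bound, self_mem_nhdsWithin]
    with x hx hxarrival hxerror hαx
  refine ⟨hx, fun S β hβ ↦ ?_⟩
  calc |(β S).1 - p - c.k / g * (x - α) ^ 2|
      = |((β S).1 - p - c.coord (x, 0) / g) + g⁻¹ * (c.coord (x, 0) - c.k * (x - α) ^ 2)| := by
        ring_nf
    _ ≤ D * c.coord (x, 0) ^ 2 + g⁻¹ * |c.coord (x, 0) - c.k * (x - α) ^ 2| := by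
        grw [abs_add_le, abs_mul, abs_of_pos (inv_pos.2 hgpos), hxarrival S β hβ]
    _ ≤ C * ‖(x - α) ^ 3‖ := (le_abs_self _).trans hxerror
    _ = C * (x - α) ^ 3 := by
        rw [Real.norm_of_nonneg (pow_nonneg (sub_nonneg.2 hαx) 3)]

end FoldTube

open scoped Pointwise in
theorem isFirstPassage_neg_iff {Y : ℝ × ℝ → ℝ × ℝ} {U : Set (ℝ × ℝ)} {q : ℝ × ℝ} {y T : ℝ}
    {γ : ℝ → ℝ × ℝ} :
    IsFirstPassage (-Y) U q y (-T) (fun t ↦ γ (-t)) ↔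
      T < 0 ∧ γ 0 = q ∧ (∀ t ∈ Icc T 0, γ t ∈ U) ∧
      (∀ t ∈ Icc T 0, HasDerivWithinAt γ (Y (γ t)) (Icc T 0) t) ∧
      (γ T).2 = y ∧ ∀ t ∈ Ioc T 0, (γ t).2 > y := by
  have hcurve : IsIntegralCurveOn (fun t ↦ γ (-t)) (fun _ ↦ -Y) (Icc 0 (-T)) ↔
      IsIntegralCurveOn γ (fun _ ↦ Y) (Icc T 0) := by
    have hset : (-1 : ℝ)⁻¹ • Icc T 0 = Icc 0 (-T) := by
      rw [inv_neg_one, Set.neg_smul_set, one_smul, neg_Icc, neg_zero]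
    simpa [hset, Function.comp_def, Pi.neg_def] using
      isIntegralCurveOn_comp_mul_ne_zero (γ := γ) (v := fun _ ↦ Y) (s := Icc T 0)
        (neg_ne_zero.2 (one_ne_zero (α := ℝ)))
  constructor
  · rintro ⟨hT, hstart, hmem, hγ, harrival, habove⟩
    refine ⟨by linarith, by simpa using hstart, fun t ht ↦ ?_, hcurve.1 hγ,
      by simpa using harrival, fun t ht ↦ ?_⟩
    · simpa using hmem (-t) ⟨by linarith [ht.2], by linarith [ht.1]⟩
    · simpa using habove (-t) ⟨by linarith [ht.2], by linarith [ht.1]⟩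
  · rintro ⟨hT, hstart, hmem, hγ, harrival, habove⟩
    exact ⟨by linarith, by simpa using hstart,
      fun t ht ↦ hmem (-t) ⟨by linarith [ht.2], by linarith [ht.1]⟩, hcurve.2 hγ,
      by simpa using harrival, fun t ht ↦ habove (-t) ⟨by linarith [ht.2], by linarith [ht.1]⟩⟩

theorem stmt_2_general {α : ℝ} {U : Set (ℝ × ℝ)} (hU : U ∈ 𝓝 (α, 0)) {Y : ℝ × ℝ → ℝ × ℝ}
    (hY : ContDiffAt ℝ 2 Y (α, 0)) (hfold : (Y (α, 0)).2 = 0)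
    (hYx : 0 < fderiv ℝ (fun p ↦ (Y p).2) (α, 0) (1, 0)) (hY1 : (Y (α, 0)).1 < 0) :
    ∃ ξ > (0 : ℝ), ∃ δ > (0 : ℝ), ∃ p : ℝ, ∃ k₁ > (0 : ℝ), ∃ C > (0 : ℝ),
      ∀ x₀ ∈ Ico α (α + δ),
        (∃ T < (0 : ℝ), ∃ γ : ℝ → ℝ × ℝ,
          γ 0 = (x₀, 0) ∧
          (∀ t ∈ Icc T 0, γ t ∈ U) ∧
          (∀ t ∈ Icc T 0, HasDerivWithinAt γ (Y (γ t)) (Icc T 0) t) ∧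
          (γ T).2 = -ξ ∧ ∀ t ∈ Ioc T 0, (γ t).2 > -ξ) ∧
        ∀ (T : ℝ) (γ : ℝ → ℝ × ℝ), T < 0 →
          γ 0 = (x₀, 0) →
          (∀ t ∈ Icc T 0, γ t ∈ U) →
          (∀ t ∈ Icc T 0, HasDerivWithinAt γ (Y (γ t)) (Icc T 0) t) →
          (γ T).2 = -ξ → (∀ t ∈ Ioc T 0, (γ t).2 > -ξ) →
          |(γ T).1 - p - k₁ * (x₀ - α) ^ 2| ≤ C * (x₀ - α) ^ 3 := by
  obtain ⟨c⟩ : Nonempty (FoldTube (-Y) U α) :=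
    nonempty_foldTube hU hY.neg (by simp [hfold]) (by simpa using hY1) (by
      simpa [fderiv_fun_neg] using hYx)
  obtain ⟨ξ, hξ, p, k, hk, C, hC, hev⟩ := c.exists_transition (hY.neg.of_le one_le_two)
  obtain ⟨u, hu, hgood⟩ := mem_nhdsGE_iff_exists_Ico_subset.1 hev
  refine ⟨ξ, hξ, u - α, sub_pos.2 hu, p, k, hk, C, hC, fun x hx ↦ ?_⟩
  obtain ⟨⟨S, β, hβ⟩, harrival⟩ := hgood (by simpa using hx)
  constructor
  · obtain ⟨hT, hγ⟩ := isFirstPassage_neg_iff (T := -S) (γ := fun t ↦ β (-t)).1 (by simpa using hβ)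
    exact ⟨-S, hT, fun t ↦ β (-t), hγ⟩
  · intro T γ hT hstart hmem hγ hend habove
    simpa using harrival (-T) (fun t ↦ γ (-t))
      (isFirstPassage_neg_iff.2 ⟨hT, hstart, hmem, hγ, hend, habove⟩)

/- STATEMENT 2: well-definedness and quadratic expansion of the backward transition
map μ₁ from the switching line Σ = {y = 0} to the section Σ⁻ = {y = −ξ}, for a C³
vector field Y = (Y¹, Y²) with a visible fold at (α, 0) and flow moving leftwards. -/
theorem stmt_2 (α : ℝ) (U : Set (ℝ × ℝ)) (hU : IsOpen U) (hUα : ((α : ℝ), (0 : ℝ)) ∈ U)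
    (Y : ℝ × ℝ → ℝ × ℝ) (hY : ContDiffOn ℝ 3 Y U)
    (hfold : (Y (α, 0)).2 = 0)
    (hYx : fderiv ℝ (fun p => (Y p).2) (α, 0) (1, 0) > 0)
    (hY1 : (Y (α, 0)).1 < 0) :
    ∃ ξ > (0 : ℝ), ∃ δ > (0 : ℝ), ∃ p : ℝ, ∃ k₁ > (0 : ℝ), ∃ C > (0 : ℝ),
      ∀ x₀ ∈ Set.Ico α (α + δ),
        -- (i) existence of a backward trajectory from (x₀,0) reaching {y = −ξ} first
        (∃ T < (0 : ℝ), ∃ γ : ℝ → ℝ × ℝ,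
          γ 0 = (x₀, 0) ∧
          (∀ t ∈ Set.Icc T (0 : ℝ), γ t ∈ U) ∧
          (∀ t ∈ Set.Icc T (0 : ℝ), HasDerivWithinAt γ (Y (γ t)) (Set.Icc T 0) t) ∧
          (γ T).2 = -ξ ∧ (∀ t ∈ Set.Ioc T (0 : ℝ), (γ t).2 > -ξ)) ∧
        -- (ii) any such trajectory hits Σ⁻ at μ₁(x₀) = p + k₁·(x₀ − α)² + O((x₀ − α)³)
        (∀ (T : ℝ) (γ : ℝ → ℝ × ℝ), T < 0 →
          γ 0 = (x₀, 0) →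
          (∀ t ∈ Set.Icc T (0 : ℝ), γ t ∈ U) →
          (∀ t ∈ Set.Icc T (0 : ℝ), HasDerivWithinAt γ (Y (γ t)) (Set.Icc T 0) t) →
          (γ T).2 = -ξ → (∀ t ∈ Set.Ioc T (0 : ℝ), (γ t).2 > -ξ) →
          |(γ T).1 - p - k₁ * (x₀ - α) ^ 2| ≤ C * (x₀ - α) ^ 3) := by
  exact stmt_2_general (hU.mem_nhds hUα) ((hY.contDiffAt (hU.mem_nhds hUα)).of_le (by norm_num))
    hfold hYx hY1
end

section
/- Let ξ > 0 and α ∈ ℝ. For every x₀ ∈ ℝ: (i) the curve γ(t) = (x₀ − t, (x₀ − α)·t − t²/2) satisfies γ'(t) = (−1, γ₁(t) − α) for all t and γ(0) = (x₀, 0), i.e. it is the trajectory of the normal form vector field Ỹ(x,y) = (−1, x − α) through (x₀, 0); (ii) T(x₀) := (x₀ − α) − √((x₀ − α)² + 2ξ) is the unique t < 0 with γ₂(t) = −ξ; (iii) the first coordinate at the hitting time is γ₁(T(x₀)) = α + √((x₀ − α)² + 2ξ); and (iv) as x₀ → α, γ₁(T(x₀)) = α + √(2ξ) + (x₀ − α)²/(2√(2ξ))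 + O((x₀ − α)³), where the quadratic coefficient 1/(2√(2ξ)) is positive. -/
/-!
The field `(-1, x - α)` has the first integral `(x - α) ^ 2 + 2 * y`. On the orbit of `(x₀, 0)` it
equals `(x₀ - α) ^ 2`, so the orbit meets `y = -ξ` exactly where
`x - α = ±√((x₀ - α) ^ 2 + 2 * ξ)`, and negative time selects the positive root.

For the expansion, `√(v + a)` falls short of its tangent at `v = 0` by exactly
`(√(v + a) - √a) ^ 2 / (2 * √a)`. Bounding one factor of the square by `√v` and the other by
`v / (2 * √a)`, with `v = (x₀ - α) ^ 2`, gives a cubic error bound valid for every `x₀`.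
-/

section SqrtExpansion

variable {a v : ℝ}

theorem sqrt_add_sub_tangent_eq (ha : 0 < a) (hva : 0 ≤ v + a) :
    √(v + a) - (√a + v / (2 * √a)) = -((√(v + a) - √a) ^ 2 / (2 * √a)) := by
  have hr : √a ≠ 0 := (Real.sqrt_pos.mpr ha).ne'
  have hv : v = √(v + a) ^ 2 - √a ^ 2 := by
    rw [Real.sq_sqrt hva, Real.sq_sqrt ha.le, add_sub_cancel_right]
  calc √(v + a) - (√a + v / (2 * √a))
      = √(v + a) - (√a + (√(v + a) ^ 2 - √a ^ 2) / (2 * √a)) := by rw [← hv]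
    _ = -((√(v + a) - √a) ^ 2 / (2 * √a)) := by field_simp; ring

theorem sqrt_add_sub_sqrt_le_div (ha : 0 < a) (hva : 0 ≤ v + a) :
    √(v + a) - √a ≤ v / (2 * √a) := by
  have hdefect : 0 ≤ (√(v + a) - √a) ^ 2 / (2 * √a) := by positivity
  linarith [sqrt_add_sub_tangent_eq ha hva]

theorem sqrt_add_le_sqrt_add_sqrt (hv : 0 ≤ v) (ha : 0 ≤ a) : √(v + a) ≤ √v + √a := by
  have hcross : 0 ≤ √v * √a := by positivity
  rw [Real.sqrt_le_left (by positivity), add_sq, Real.sq_sqrt hv, Real.sq_sqrt ha]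
  linarith

theorem abs_sqrt_add_sub_tangent_le (ha : 0 < a) (hv : 0 ≤ v) :
    |√(v + a) - (√a + v / (2 * √a))| ≤ 1 / (4 * a) * (√v * v) := by
  have hva : 0 ≤ v + a := by positivity
  have hincr : 0 ≤ √(v + a) - √a := sub_nonneg.mpr (Real.sqrt_le_sqrt (by linarith))
  have hle_sqrt : √(v + a) - √a ≤ √v := by linarith [sqrt_add_le_sqrt_add_sqrt hv ha.le]
  calc |√(v + a) - (√a + v / (2 * √a))|
      = (√(v + a) - √a) * (√(v + a) - √a) / (2 * √a) := by
        rw [sqrt_add_sub_tangent_eq ha hva, abs_neg, abs_of_nonneg (by positivity), sq]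
    _ ≤ √v * (v / (2 * √a)) / (2 * √a) := by
        gcongr
        exact sqrt_add_sub_sqrt_le_div ha hva
    _ = 1 / (4 * √a ^ 2) * (√v * v) := by ring
    _ = 1 / (4 * a) * (√v * v) := by rw [Real.sq_sqrt ha.le]

theorem abs_sqrt_sq_add_sub_tangent_le (ha : 0 < a) (u : ℝ) :
    |√(u ^ 2 + a) - (√a + u ^ 2 / (2 * √a))| ≤ 1 / (4 * a) * |u| ^ 3 := by
  have h := abs_sqrt_add_sub_tangent_le ha (sq_nonneg u)
  rwa [Real.sqrt_sq_eq_abs, ← sq_abs u, ← pow_succ', sq_abs] at h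

end SqrtExpansion

/-- The normal form `Ỹ` of a planar vector field with a visible fold at `(α, 0)`. -/
def foldField (α : ℝ) (p : ℝ × ℝ) : ℝ × ℝ := (-1, p.1 - α)

/-- The explicit orbit `γ` of `foldField α` through `(x₀, 0)`, parametrised by time. -/
noncomputable def foldOrbit (α x₀ t : ℝ) : ℝ × ℝ := (x₀ - t, (x₀ - α) * t - t ^ 2 / 2)

/-- The time `T(x₀)` at which the backward orbit of `(x₀, 0)` reaches the section `y = -ξ`, for
`0 < ξ`. When `(x₀ - α) ^ 2 + 2 * ξ < 0` the orbit misses the section and `√` is a junk value. -/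
noncomputable def foldHittingTime (ξ α x₀ : ℝ) : ℝ := (x₀ - α) - √((x₀ - α) ^ 2 + 2 * ξ)

section FoldOrbit

variable {ξ : ℝ} (α x₀ : ℝ)

theorem foldOrbit_zero : foldOrbit α x₀ 0 = (x₀, 0) := by
  simp [foldOrbit]

theorem hasDerivAt_foldOrbit (t : ℝ) :
    HasDerivAt (foldOrbit α x₀) (foldField α (foldOrbit α x₀ t)) t := by
  have hfst : HasDerivAt (fun s => x₀ - s) (-1) t := (hasDerivAt_id t).const_sub x₀
  have hsnd : HasDerivAt (fun s => (x₀ - α) * s - s ^ 2 / 2) (x₀ - t - α) t := by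
    have h := ((hasDerivAt_id' t).const_mul (x₀ - α)).sub ((hasDerivAt_pow 2 t).div_const 2)
    exact h.congr_deriv (by norm_num; ring)
  exact hfst.prodMk hsnd

theorem foldOrbit_first_integral (t : ℝ) :
    ((foldOrbit α x₀ t).1 - α) ^ 2 + 2 * (foldOrbit α x₀ t).2 = (x₀ - α) ^ 2 := by
  simp only [foldOrbit]
  ring

theorem foldOrbit_snd_eq_neg_iff (t : ℝ) :
    (foldOrbit α x₀ t).2 = -ξ ↔ ((foldOrbit α x₀ t).1 - α) ^ 2 = (x₀ - α) ^ 2 + 2 * ξ := by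
  rw [← foldOrbit_first_integral α x₀ t]
  constructor <;> intro h <;> linarith

theorem foldOrbit_fst_foldHittingTime :
    (foldOrbit α x₀ (foldHittingTime ξ α x₀)).1 = α + √((x₀ - α) ^ 2 + 2 * ξ) := by
  simp only [foldOrbit, foldHittingTime]
  ring

theorem foldOrbit_snd_foldHittingTime (h : 0 ≤ (x₀ - α) ^ 2 + 2 * ξ) :
    (foldOrbit α x₀ (foldHittingTime ξ α x₀)).2 = -ξ := by
  rw [foldOrbit_snd_eq_neg_iff, foldOrbit_fst_foldHittingTime, add_sub_cancel_left, Real.sq_sqrt h]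

theorem foldHittingTime_neg (hξ : 0 < ξ) : foldHittingTime ξ α x₀ < 0 :=
  sub_neg.mpr (Real.lt_sqrt_of_sq_lt (by linarith))

theorem eq_foldHittingTime_of_neg (hξ : 0 ≤ ξ) {t : ℝ} (ht : t < 0)
    (hit : (foldOrbit α x₀ t).2 = -ξ) : t = foldHittingTime ξ α x₀ := by
  have habs : |x₀ - t - α| = √((x₀ - α) ^ 2 + 2 * ξ) := by
    rw [← (foldOrbit_snd_eq_neg_iff α x₀ t).mp hit, Real.sqrt_sq_eq_abs, foldOrbit]
  have hneg_le : -√((x₀ - α) ^ 2 + 2 * ξ) ≤ x₀ - α :=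
    Real.neg_sqrt_le_of_sq_le (by linarith)
  rw [foldHittingTime]
  rcases eq_or_eq_neg_of_abs_eq habs with right_branch | left_branch <;> linarith

end FoldOrbit

theorem stmt_3 (ξ α : ℝ) (hξ : 0 < ξ) :
    (∀ x₀ : ℝ,
      -- (i)
      (∀ t : ℝ, HasDerivAt (fun s : ℝ => ((x₀ - s, (x₀ - α) * s - s ^ 2 / 2) : ℝ × ℝ))
          (-1, (x₀ - t) - α) t) ∧
      ((x₀ - (0 : ℝ), (x₀ - α) * 0 - (0 : ℝ) ^ 2 / 2) = ((x₀, 0) : ℝ × ℝ)) ∧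
      -- (ii)
      ((x₀ - α) - Real.sqrt ((x₀ - α) ^ 2 + 2 * ξ) < 0 ∧
        (x₀ - α) * ((x₀ - α) - Real.sqrt ((x₀ - α) ^ 2 + 2 * ξ))
            - ((x₀ - α) - Real.sqrt ((x₀ - α) ^ 2 + 2 * ξ)) ^ 2 / 2 = -ξ ∧
        (∀ t : ℝ, t < 0 → (x₀ - α) * t - t ^ 2 / 2 = -ξ →
          t = (x₀ - α) - Real.sqrt ((x₀ - α) ^ 2 + 2 * ξ))) ∧
      -- (iii)
      (x₀ - ((x₀ - α) - Real.sqrt ((x₀ - α) ^ 2 + 2 * ξ))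
        = α + Real.sqrt ((x₀ - α) ^ 2 + 2 * ξ))) ∧
    -- (iv)
    (0 < 1 / (2 * Real.sqrt (2 * ξ)) ∧
      ∃ δ > (0 : ℝ), ∃ C > (0 : ℝ), ∀ x₀ : ℝ, |x₀ - α| < δ →
        |(α + Real.sqrt ((x₀ - α) ^ 2 + 2 * ξ))
            - (α + Real.sqrt (2 * ξ) + (x₀ - α) ^ 2 / (2 * Real.sqrt (2 * ξ)))|
          ≤ C * |x₀ - α| ^ 3) := by
  refine ⟨fun x₀ => ⟨?_, ?_, ⟨?_, ?_, ?_⟩, ?_⟩, by positivity,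
    1, one_pos, 1 / (4 * (2 * ξ)), by positivity, fun x₀ _ => ?_⟩
  · exact hasDerivAt_foldOrbit α x₀
  · exact foldOrbit_zero α x₀
  · exact foldHittingTime_neg α x₀ hξ
  · exact foldOrbit_snd_foldHittingTime α x₀ (by positivity)
  · exact fun t => eq_foldHittingTime_of_neg α x₀ hξ.le
  · exact foldOrbit_fst_foldHittingTime α x₀
  · rw [add_assoc α, add_sub_add_left_eq_sub]
    exact abs_sqrt_sq_add_sub_tangent_le (by positivity) (x₀ - α)
end

section
/- There exist a neighborhood I ⊆ ℝ of 0 and C¹ functions x : I → ℝ and β₁ : I → ℝ, with x(α) = −(k/L)·α + O(α²) and β₁(α) = (kℓ/L)·α² + O(α³) as α → 0, such that for every α ∈ I the function f_{α,β₁(α)} has a zero of multiplicity two at x(α): f_{α,β₁(α)}(x(α)) = 0, f_{α,β₁(α)}'(x(α)) = 0, and f_{α,β₁(α)}''(x(α)) = 2L + O(α) ≠ 0. Moreover, this curve is unique: there is a neighborhood W of (0,0,0) in ℝ³ such that if (α, β, x) ∈ W, f_{α,β}(x) = 0 and f_{α,β}'(x) = 0, then β = β₁(α) and x = x(α). -/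
/-!
A point `x` is a double zero of `f_{α,β}` exactly when `P' x = Q' (x - α)` and
`β = Q (x - α) - P x`. The first equation does not involve `β`, and at the origin its
`x`-derivative is `P'' 0 - Q'' 0 = 2L ≠ 0`, so the implicit function theorem solves it uniquely by
a curve `x = ξ α`; the second equation then defines `β₁`. Substituting the Taylor expansions
`P' x = 2ℓx + O(x²)` and `Q' x = 2kx + O(x²)` into the first equation gives
`2L ξ α = -2kα + O(α²)`. Completing the square, `k(x - α)² - ℓx² = (kℓ/L)α² - L(x + (k/L)α)²`, so
the error of `ξ` enters that of `β₁` squared and the leading term of `β₁` is `(kℓ/L)α²`.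
-/

open Asymptotics Filter Topology
open scoped ContDiff Nat

section Calculus

theorem contDiffAt_deriv {𝕜 F : Type*} [NontriviallyNormedField 𝕜] [NormedAddCommGroup F]
    [NormedSpace 𝕜 F] {f : 𝕜 → F} {x : 𝕜} {m n : ℕ∞ω} (hf : ContDiffAt 𝕜 n f x)
    (hmn : m + 1 ≤ n) : ContDiffAt 𝕜 m (deriv f) x :=
  (hf.fderiv_right hmn).clm_apply contDiffAt_const

theorem isBigO_sub_taylor {E : Type*} [NormedAddCommGroup E] [NormedSpace ℝ E] {f : ℝ → E}
    {x₀ : ℝ} {n : ℕ} (hf : ContDiffAt ℝ (n + 1 : ℕ) f x₀) :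
    (fun x ↦ f x - ∑ i ∈ Finset.range (n + 1),
      ((i ! : ℝ)⁻¹ * (x - x₀) ^ i) • iteratedDeriv i f x₀) =O[𝓝 x₀] fun x ↦ (x - x₀) ^ (n + 1) := by
  obtain ⟨δ, hδ, hfδ⟩ : ∃ δ > 0, ContDiffOn ℝ (n + 1 : ℕ) f (Metric.ball x₀ δ) := by
    obtain ⟨δ, hδ, h⟩ := Metric.eventually_nhds_iff_ball.1 (hf.eventually (by simp))
    exact ⟨δ, hδ, fun x hx ↦ (h x hx).contDiffWithinAt⟩
  have hx₀ : x₀ ∈ Metric.ball x₀ δ := Metric.mem_ball_self hδ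
  have hlittle := taylor_isLittleO (convex_ball x₀ δ) hx₀ hfδ
  rw [Metric.isOpen_ball.nhdsWithin_eq hx₀] at hlittle
  simp only [taylor_within_apply, iteratedDerivWithin_of_isOpen Metric.isOpen_ball hx₀] at hlittle
  have hterm : (fun x ↦ (((n + 1)! : ℝ)⁻¹ * (x - x₀) ^ (n + 1)) • iteratedDeriv (n + 1) f x₀)
      =O[𝓝 x₀] fun x ↦ (x - x₀) ^ (n + 1) := by
    refine .of_bound (‖((n + 1)! : ℝ)⁻¹‖ * ‖iteratedDeriv (n + 1) f x₀‖) (.of_forall fun x ↦ ?_)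
    rw [norm_smul, norm_mul, mul_right_comm]
  refine (hlittle.isBigO.add hterm).congr_left fun x ↦ ?_
  rw [Finset.sum_range_succ _ (n + 1)]
  abel

theorem exists_contDiffAt_implicit {𝕜 E : Type*} [RCLike 𝕜] [NormedAddCommGroup E]
    [NormedSpace 𝕜 E] [CompleteSpace E] {F : E × 𝕜 → 𝕜} {u : E × 𝕜} {n : ℕ∞ω} {d : 𝕜}
    (hF : ContDiffAt 𝕜 n F u) (hn : n ≠ 0) (hd : HasDerivAt (fun y ↦ F (u.1, y)) d u.2)
    (hd0 : d ≠ 0) :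
    ∃ ψ : E → 𝕜, ψ u.1 = u.2 ∧ ContDiffAt 𝕜 n ψ u.1 ∧ ∀ᶠ v in 𝓝 u, F v = F u ↔ ψ v.1 = v.2 := by
  have hpartial : (fderiv 𝕜 F u ∘L .inr 𝕜 E 𝕜) 1 = d :=
    ((hF.differentiableAt hn).hasFDerivAt.comp u.2
      (hasFDerivAt_prodMk_right u.1 u.2)).hasDerivAt.unique hd
  have hinv : (fderiv 𝕜 F u ∘L .inr 𝕜 E 𝕜).IsInvertible :=
    ⟨ContinuousLinearEquiv.unitsEquivAut 𝕜 (Units.mk0 d hd0), by ext; rw [hpartial]; simp⟩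
  exact ⟨hF.implicitFunction hn hinv, hF.implicitFunction_apply_self hn hinv,
    hF.contDiffAt_implicitFunction hn hinv, hF.eventually_apply_eq_iff_implicitFunction hn hinv⟩

theorem isBigO_comp_sub_comp_sub {R S ξ : ℝ → ℝ} {n : ℕ} (hR : R =O[𝓝 0] (· ^ n))
    (hS : S =O[𝓝 0] (· ^ n)) (hξ : ξ =O[𝓝 0] fun α ↦ α) :
    (fun α ↦ R (ξ α) - S (ξ α - α)) =O[𝓝 0] (· ^ n) := by
  have hξ' : (fun α ↦ ξ α - α) =O[𝓝 0] fun α ↦ α := hξ.sub (isBigO_refl _ _)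
  exact ((hR.comp_tendsto (hξ.trans_tendsto tendsto_id)).trans (hξ.pow n)).sub
    ((hS.comp_tendsto (hξ'.trans_tendsto tendsto_id)).trans (hξ'.pow n))

end Calculus

/-- `P` is `C³` at `0` and has `2`-jet `ℓ x²` there: the normalisation of the functions `P`
(with `ℓ`) and `Q` (with `k`) at a two-fold cycle. -/
structure IsQuadraticFold (P : ℝ → ℝ) (ℓ : ℝ) : Prop where
  contDiffAt : ContDiffAt ℝ 3 P 0
  apply_zero : P 0 = 0
  deriv_zero : deriv P 0 = 0
  deriv_deriv_zero : deriv (deriv P) 0 = 2 * ℓ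

namespace IsQuadraticFold

variable {P : ℝ → ℝ} {ℓ : ℝ}

theorem contDiffAt_two_deriv (hP : IsQuadraticFold P ℓ) : ContDiffAt ℝ 2 (deriv P) 0 :=
  contDiffAt_deriv hP.contDiffAt (by norm_num)

theorem isBigO_sub_sq (hP : IsQuadraticFold P ℓ) :
    (fun x ↦ P x - ℓ * x ^ 2) =O[𝓝 0] (· ^ 3) := by
  have htaylor := isBigO_sub_taylor (n := 2) hP.contDiffAt
  refine htaylor.congr (fun x ↦ ?_) fun x ↦ by rw [sub_zero]
  simp only [Finset.sum_range_succ, Finset.sum_range_zero, iteratedDeriv_succ, iteratedDeriv_zero,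
    hP.apply_zero, hP.deriv_zero, hP.deriv_deriv_zero, Nat.factorial_two, smul_eq_mul]
  ring

theorem isBigO_deriv_sub (hP : IsQuadraticFold P ℓ) :
    (fun x ↦ deriv P x - 2 * ℓ * x) =O[𝓝 0] (· ^ 2) := by
  have htaylor := isBigO_sub_taylor (n := 1) hP.contDiffAt_two_deriv
  refine htaylor.congr (fun x ↦ ?_) fun x ↦ by rw [sub_zero]
  simp only [Finset.sum_range_succ, Finset.sum_range_zero, iteratedDeriv_succ, iteratedDeriv_zero,
    hP.deriv_zero, hP.deriv_deriv_zero, Nat.factorial_one, smul_eq_mul]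
  ring

theorem isBigO_deriv_deriv_sub (hP : IsQuadraticFold P ℓ) :
    (fun x ↦ deriv (deriv P) x - 2 * ℓ) =O[𝓝 0] (· ^ 1) := by
  have hC1 : ContDiffAt ℝ 1 (deriv (deriv P)) 0 :=
    contDiffAt_deriv hP.contDiffAt_two_deriv (by norm_num)
  simpa [hP.deriv_deriv_zero] using (hC1.differentiableAt one_ne_zero).isBigO_sub

theorem eventually_contDiffAt (hP : IsQuadraticFold P ℓ) : ∀ᶠ x in 𝓝 0, ContDiffAt ℝ 3 P x :=
  hP.contDiffAt.eventually (by simp)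

end IsQuadraticFold

/-- The displacement function `f_{α,β}` of a two-fold cycle, with the parameters first. -/
def displacement (P Q : ℝ → ℝ) (α β x : ℝ) : ℝ :=
  β + P x - Q (x - α)

/-- The value of `β` for which `x` is a zero of `displacement P Q α β`. -/
def zeroParam (P Q : ℝ → ℝ) (α x : ℝ) : ℝ :=
  Q (x - α) - P x

section Displacement

variable {P Q : ℝ → ℝ} {α β x : ℝ}

theorem displacement_eq_zero_iff : displacement P Q α β x = 0 ↔ β = zeroParam P Q α x := by
  unfold displacement zeroParam
  grind

theorem deriv_displacement (hP : DifferentiableAt ℝ P x) (hQ : DifferentiableAt ℝ Q (x - α)) :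
    deriv (displacement P Q α β) x = deriv P x - deriv Q (x - α) :=
  ((hP.hasDerivAt.const_add β).sub (hQ.hasDerivAt.comp_sub_const x α)).deriv

theorem deriv_deriv_displacement (hP : ContDiffAt ℝ 2 P x) (hQ : ContDiffAt ℝ 2 Q (x - α)) :
    deriv (deriv (displacement P Q α β)) x = deriv (deriv P) x - deriv (deriv Q) (x - α) := by
  have hderiv : deriv (displacement P Q α β) =ᶠ[𝓝 x] fun y ↦ deriv P y - deriv Q (y - α) := by
    have hshift : Tendsto (· - α) (𝓝 x) (𝓝 (x - α)) := (continuous_sub_right α).tendsto x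
    filter_upwards [hP.eventually (by simp), hshift.eventually (hQ.eventually (by simp))]
      with y hPy hQy
    exact deriv_displacement (hPy.differentiableAt two_ne_zero) (hQy.differentiableAt two_ne_zero)
  have hP' := (contDiffAt_deriv (m := 1) hP (by norm_num)).differentiableAt one_ne_zero
  have hQ' := (contDiffAt_deriv (m := 1) hQ (by norm_num)).differentiableAt one_ne_zero
  rw [hderiv.deriv_eq]
  exact (hP'.hasDerivAt.sub (hQ'.hasDerivAt.comp_sub_const x α)).deriv

end Displacement

/-- Near the origin, `x = ξ α` is a `C²` parametrisation of the set of pairs `(α, x)` such that `x`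
is a critical point of `displacement P Q α β`. That set does not depend on `β`. -/
structure IsCriticalCurve (P Q ξ : ℝ → ℝ) : Prop where
  apply_zero : ξ 0 = 0
  contDiffAt : ContDiffAt ℝ 2 ξ 0
  eventually_deriv_eq_iff :
    ∀ᶠ v : ℝ × ℝ in 𝓝 (0, 0), deriv P v.2 = deriv Q (v.2 - v.1) ↔ ξ v.1 = v.2

section CriticalCurve

variable {P Q ξ : ℝ → ℝ} {ℓ k : ℝ}

theorem IsQuadraticFold.exists_isCriticalCurve (hP : IsQuadraticFold P ℓ)
    (hQ : IsQuadraticFold Q k) (hne : ℓ - k ≠ 0) : ∃ ξ, IsCriticalCurve P Q ξ := by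
  let F : ℝ × ℝ → ℝ := fun v ↦ deriv P v.2 - deriv Q (v.2 - v.1)
  have hF : ContDiffAt ℝ 2 F (0, 0) :=
    (hP.contDiffAt_two_deriv.comp (0, 0) contDiffAt_snd).sub
      (ContDiffAt.comp (g := deriv Q) (f := fun v : ℝ × ℝ ↦ v.2 - v.1) (0, 0)
        (by simpa using hQ.contDiffAt_two_deriv) (contDiffAt_snd.sub contDiffAt_fst))
  have hd : HasDerivAt (fun x ↦ F (0, x)) (2 * ℓ - 2 * k) 0 := by
    have hP' := (hP.contDiffAt_two_deriv.differentiableAt two_ne_zero).hasDerivAt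
    have hQ' := (hQ.contDiffAt_two_deriv.differentiableAt two_ne_zero).hasDerivAt
    simpa [F, hP.deriv_deriv_zero, hQ.deriv_deriv_zero] using hP'.fun_sub hQ'
  obtain ⟨ξ, hξ0, hξ, hiff⟩ := exists_contDiffAt_implicit hF two_ne_zero hd (by grind)
  refine ⟨ξ, hξ0, hξ, hiff.mono fun v hv ↦ ?_⟩
  rw [← hv]
  simp [F, hP.deriv_zero, hQ.deriv_zero, sub_eq_zero]

namespace IsCriticalCurve

theorem isBigO_id (hξ : IsCriticalCurve P Q ξ) : ξ =O[𝓝 0] fun α ↦ α := by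
  simpa [hξ.apply_zero] using (hξ.contDiffAt.differentiableAt two_ne_zero).isBigO_sub

theorem tendsto (hξ : IsCriticalCurve P Q ξ) : Tendsto ξ (𝓝 0) (𝓝 0) :=
  hξ.isBigO_id.trans_tendsto tendsto_id

theorem tendsto_sub_self (hξ : IsCriticalCurve P Q ξ) :
    Tendsto (fun α ↦ ξ α - α) (𝓝 0) (𝓝 0) := by
  simpa using hξ.tendsto.sub tendsto_id

theorem eventually_deriv_eq (hξ : IsCriticalCurve P Q ξ) :
    ∀ᶠ α in 𝓝 0, deriv P (ξ α) = deriv Q (ξ α - α) := by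
  have hgraph : Tendsto (fun α ↦ (α, ξ α)) (𝓝 0) (𝓝 (0, 0)) := tendsto_id.prodMk_nhds hξ.tendsto
  exact (hgraph.eventually hξ.eventually_deriv_eq_iff).mono fun α h ↦ h.2 rfl

theorem eventually_contDiffAt (hξ : IsCriticalCurve P Q ξ) (hP : IsQuadraticFold P ℓ)
    (hQ : IsQuadraticFold Q k) :
    ∀ᶠ α in 𝓝 0, ContDiffAt ℝ 3 P (ξ α) ∧ ContDiffAt ℝ 3 Q (ξ α - α) :=
  (hξ.tendsto.eventually hP.eventually_contDiffAt).and
    (hξ.tendsto_sub_self.eventually hQ.eventually_contDiffAt)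

theorem contDiffAt_zeroParam (hξ : IsCriticalCurve P Q ξ) (hP : IsQuadraticFold P ℓ)
    (hQ : IsQuadraticFold Q k) : ContDiffAt ℝ 2 (fun α ↦ zeroParam P Q α (ξ α)) 0 := by
  have hP2 : ContDiffAt ℝ 2 P (ξ 0) := by
    simpa [hξ.apply_zero] using hP.contDiffAt.of_le (m := 2) (by norm_num)
  have hQ2 : ContDiffAt ℝ 2 Q (ξ 0 - 0) := by
    simpa [hξ.apply_zero] using hQ.contDiffAt.of_le (m := 2) (by norm_num)
  exact (hQ2.comp (f := fun α ↦ ξ α - α) 0 (hξ.contDiffAt.sub contDiffAt_id)).sub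
    (hP2.comp 0 hξ.contDiffAt)

theorem isBigO_add_mul (hξ : IsCriticalCurve P Q ξ) (hP : IsQuadraticFold P ℓ)
    (hQ : IsQuadraticFold Q k) (hne : ℓ - k ≠ 0) :
    (fun α ↦ ξ α + k / (ℓ - k) * α) =O[𝓝 0] (· ^ 2) := by
  have hremainder := isBigO_comp_sub_comp_sub hP.isBigO_deriv_sub hQ.isBigO_deriv_sub hξ.isBigO_id
  refine (hremainder.const_mul_left (-(2 * (ℓ - k))⁻¹)).congr' ?_ .rfl
  filter_upwards [hξ.eventually_deriv_eq] with α hα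
  rw [hα]
  field_simp
  ring

theorem isBigO_zeroParam_sub (hξ : IsCriticalCurve P Q ξ) (hP : IsQuadraticFold P ℓ)
    (hQ : IsQuadraticFold Q k) (hne : ℓ - k ≠ 0) :
    (fun α ↦ zeroParam P Q α (ξ α) - k * ℓ / (ℓ - k) * α ^ 2) =O[𝓝 0] (· ^ 3) := by
  have hremainder := isBigO_comp_sub_comp_sub hP.isBigO_sub_sq hQ.isBigO_sub_sq hξ.isBigO_id
  have hsquare : (fun α ↦ (ξ α + k / (ℓ - k) * α) ^ 2) =O[𝓝 0] (· ^ 3) := by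
    have hfourth : (fun α ↦ (ξ α + k / (ℓ - k) * α) ^ 2) =O[𝓝 0] fun α ↦ α ^ 4 := by
      simpa only [← pow_mul] using (hξ.isBigO_add_mul hP hQ hne).pow 2
    exact hfourth.trans (isLittleO_pow_pow (by norm_num)).isBigO
  refine (hremainder.neg_left.sub (hsquare.const_mul_left (ℓ - k))).congr_left fun α ↦ ?_
  unfold zeroParam
  field_simp
  ring

theorem isBigO_deriv_deriv_displacement_sub (hξ : IsCriticalCurve P Q ξ)
    (hP : IsQuadraticFold P ℓ) (hQ : IsQuadraticFold Q k) (β : ℝ → ℝ) :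
    (fun α ↦ deriv (deriv (displacement P Q α (β α))) (ξ α) - 2 * (ℓ - k)) =O[𝓝 0] fun α ↦ α := by
  have hremainder :=
    isBigO_comp_sub_comp_sub hP.isBigO_deriv_deriv_sub hQ.isBigO_deriv_deriv_sub hξ.isBigO_id
  simp only [pow_one] at hremainder
  refine hremainder.congr' ?_ .rfl
  filter_upwards [hξ.eventually_contDiffAt hP hQ] with α ⟨hPα, hQα⟩
  rw [deriv_deriv_displacement (hPα.of_le (by norm_num)) (hQα.of_le (by norm_num))]
  ring

theorem eventually_deriv_deriv_displacement_ne_zero (hξ : IsCriticalCurve P Q ξ)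
    (hP : IsQuadraticFold P ℓ) (hQ : IsQuadraticFold Q k) (hne : ℓ - k ≠ 0) (β : ℝ → ℝ) :
    ∀ᶠ α in 𝓝 0, deriv (deriv (displacement P Q α (β α))) (ξ α) ≠ 0 := by
  have htendsto := (hξ.isBigO_deriv_deriv_displacement_sub hP hQ β).trans_tendsto tendsto_id
  exact (tendsto_sub_nhds_zero_iff.1 htendsto).eventually_ne (mul_ne_zero two_ne_zero hne)

theorem eventually_deriv_displacement_eq_zero (hξ : IsCriticalCurve P Q ξ)
    (hP : IsQuadraticFold P ℓ) (hQ : IsQuadraticFold Q k) :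
    ∀ᶠ α in 𝓝 0, ∀ β, deriv (displacement P Q α β) (ξ α) = 0 := by
  filter_upwards [hξ.eventually_deriv_eq, hξ.eventually_contDiffAt hP hQ] with α hα ⟨hPα, hQα⟩ β
  rw [deriv_displacement (hPα.differentiableAt three_ne_zero)
    (hQα.differentiableAt three_ne_zero), hα, sub_self]

theorem eventually_eq_of_double_zero (hξ : IsCriticalCurve P Q ξ) (hP : IsQuadraticFold P ℓ)
    (hQ : IsQuadraticFold Q k) :
    ∀ᶠ w : ℝ × ℝ × ℝ in 𝓝 (0, 0, 0), displacement P Q w.1 w.2.1 w.2.2 = 0 →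
      deriv (displacement P Q w.1 w.2.1) w.2.2 = 0 →
      w.2.1 = zeroParam P Q w.1 (ξ w.1) ∧ w.2.2 = ξ w.1 := by
  have hpair : Tendsto (fun w : ℝ × ℝ × ℝ ↦ (w.1, w.2.2)) (𝓝 (0, 0, 0)) (𝓝 (0, 0)) :=
    Continuous.tendsto' (by fun_prop) _ _ rfl
  have hx : Tendsto (fun w : ℝ × ℝ × ℝ ↦ w.2.2) (𝓝 (0, 0, 0)) (𝓝 0) :=
    Continuous.tendsto' (by fun_prop) _ _ rfl
  have hshift : Tendsto (fun w : ℝ × ℝ × ℝ ↦ w.2.2 - w.1) (𝓝 (0, 0, 0)) (𝓝 0) :=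
    Continuous.tendsto' (by fun_prop) _ _ (sub_zero 0)
  filter_upwards [hpair.eventually hξ.eventually_deriv_eq_iff,
    hx.eventually hP.eventually_contDiffAt, hshift.eventually hQ.eventually_contDiffAt]
    with w hiff hPw hQw hzero hcrit
  rw [deriv_displacement (hPw.differentiableAt three_ne_zero)
    (hQw.differentiableAt three_ne_zero), sub_eq_zero] at hcrit
  have hξw : ξ w.1 = w.2.2 := hiff.1 hcrit
  exact ⟨hξw ▸ displacement_eq_zero_iff.1 hzero, hξw.symm⟩

end IsCriticalCurve

end CriticalCurve

theorem stmt_5_general {P Q : ℝ → ℝ} {ℓ k L : ℝ} (hL : L = ℓ - k) (hL0 : L ≠ 0)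
    (hP : IsQuadraticFold P ℓ) (hQ : IsQuadraticFold Q k) :
    ∃ ε > (0 : ℝ), ∃ xc β₁ : ℝ → ℝ,
      ContDiffOn ℝ 2 xc (Set.Ioo (-ε) ε) ∧ ContDiffOn ℝ 2 β₁ (Set.Ioo (-ε) ε) ∧
      (∃ C > (0 : ℝ), ∀ α ∈ Set.Ioo (-ε) ε,
        |xc α + (k / L) * α| ≤ C * α ^ 2 ∧ |β₁ α - (k * ℓ / L) * α ^ 2| ≤ C * |α| ^ 3) ∧
      (∃ C > (0 : ℝ), ∀ α ∈ Set.Ioo (-ε) ε,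
        displacement P Q α (β₁ α) (xc α) = 0 ∧
        deriv (displacement P Q α (β₁ α)) (xc α) = 0 ∧
        |deriv (deriv (displacement P Q α (β₁ α))) (xc α) - 2 * L| ≤ C * |α| ∧
        deriv (deriv (displacement P Q α (β₁ α))) (xc α) ≠ 0) ∧
      (∃ W ∈ 𝓝 ((0, 0, 0) : ℝ × ℝ × ℝ), ∀ α β x : ℝ, (α, β, x) ∈ W →
        displacement P Q α β x = 0 → deriv (displacement P Q α β) x = 0 →
        β = β₁ α ∧ x = xc α) := by
  subst hL
  obtain ⟨ξ, hξ⟩ := hP.exists_isCriticalCurve hQ hL0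
  let β₁ : ℝ → ℝ := fun α ↦ zeroParam P Q α (ξ α)
  obtain ⟨C, hC, hξC, hβC, hdC⟩ := ((eventually_gt_atTop (0 : ℝ)).and <|
    (isBigO_iff_eventually.1 (hξ.isBigO_add_mul hP hQ hL0)).and <|
    (isBigO_iff_eventually.1 (hξ.isBigO_zeroParam_sub hP hQ hL0)).and <|
    isBigO_iff_eventually.1 (hξ.isBigO_deriv_deriv_displacement_sub hP hQ β₁)).exists
  obtain ⟨ε, hε, hball⟩ := Metric.eventually_nhds_iff_ball.1 <|
    (hξ.contDiffAt.eventually (by simp)).and <|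
    ((hξ.contDiffAt_zeroParam hP hQ).eventually (by simp)).and <|
    hξC.and <| hβC.and <| hdC.and <| (hξ.eventually_deriv_displacement_eq_zero hP hQ).and <|
    hξ.eventually_deriv_deriv_displacement_ne_zero hP hQ hL0 β₁
  simp only [Real.ball_eq_Ioo, zero_sub, zero_add, Real.norm_eq_abs, abs_pow, sq_abs]
    at hball
  choose! hξ2 hβ2 hξC hβC hdC hcrit hne using hball
  exact ⟨ε, hε, ξ, β₁, fun α hα ↦ (hξ2 α hα).contDiffWithinAt,
    fun α hα ↦ (hβ2 α hα).contDiffWithinAt,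
    ⟨C, hC, fun α hα ↦ ⟨hξC α hα, hβC α hα⟩⟩,
    ⟨C, hC, fun α hα ↦ ⟨displacement_eq_zero_iff.2 rfl, hcrit α hα _, hdC α hα, hne α hα⟩⟩,
    _, hξ.eventually_eq_of_double_zero hP hQ, fun _ _ _ hw ↦ hw⟩

theorem stmt_5 (ℓ k L : ℝ) (hℓ : ℓ < 0) (hk : k < 0) (hLdef : L = ℓ - k) (hL0 : L ≠ 0)
    (P Q : ℝ → ℝ)
    (hP : ContDiffAt ℝ 3 P 0) (hQ : ContDiffAt ℝ 3 Q 0)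
    (hP0 : P 0 = 0) (hP1 : deriv P 0 = 0) (hP2 : deriv (deriv P) 0 = 2 * ℓ)
    (hQ0 : Q 0 = 0) (hQ1 : deriv Q 0 = 0) (hQ2 : deriv (deriv Q) 0 = 2 * k) :
    ∃ ε > (0 : ℝ), ∃ xc β₁ : ℝ → ℝ,
      -- C¹ curves on the neighborhood I = (−ε, ε) of 0
      ContDiffOn ℝ 1 xc (Set.Ioo (-ε) ε) ∧ ContDiffOn ℝ 1 β₁ (Set.Ioo (-ε) ε) ∧
      -- asymptotics x(α) = −(k/L)α + O(α²), β₁(α) = (kℓ/L)α² + O(α³)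
      (∃ C > (0 : ℝ), ∀ α ∈ Set.Ioo (-ε) ε,
        |xc α + (k / L) * α| ≤ C * α ^ 2 ∧
        |β₁ α - (k * ℓ / L) * α ^ 2| ≤ C * |α| ^ 3) ∧
      -- double zero: f = 0, f' = 0, f'' = 2L + O(α) ≠ 0 at x(α)
      (∃ C > (0 : ℝ), ∀ α ∈ Set.Ioo (-ε) ε,
        (β₁ α + P (xc α) - Q (xc α - α) = 0) ∧
        deriv (fun x => β₁ α + P x - Q (x - α)) (xc α) = 0 ∧
        |deriv (deriv (fun x => β₁ α + P x - Q (x - α))) (xc α) - 2 * L| ≤ C * |α| ∧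
        deriv (deriv (fun x => β₁ α + P x - Q (x - α))) (xc α) ≠ 0) ∧
      -- uniqueness of the double-zero curve
      (∃ W ∈ nhds (((0 : ℝ), (0 : ℝ), (0 : ℝ)) : ℝ × ℝ × ℝ),
        ∀ α β x : ℝ, (α, β, x) ∈ W →
          β + P x - Q (x - α) = 0 →
          deriv (fun y => β + P y - Q (y - α)) x = 0 →
          β = β₁ α ∧ x = xc α) := by
  obtain ⟨ε, hε, xc, β₁, hxc, hβ₁, hcurve⟩ :=
    stmt_5_general hLdef hL0 ⟨hP, hP0, hP1, hP2⟩ ⟨hQ, hQ0, hQ1, hQ2⟩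
  exact ⟨ε, hε, xc, β₁, hxc.of_le one_le_two, hβ₁.of_le one_le_two, hcurve⟩
end
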